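/- arXiv:2210.03545 — 2 statements merged into one kernel-verified Lean document; each statement's English description precedes it below -/
import Mathlib

section
/- There is a constant c > 0 and, for each pair of integers a ≥ b ≥ 2, a constant c'_a > 0 such that for all sufficiently large n: 2^{c·(log n)²} ≤ gr(Γ_{a,b}, K_n) ≤ 2^{c'_a·n^{1 − 1/(2^b − 1)}·log n}. -/
/-- Adjacency in the grid graph `K_m □ K_n`. -/
def GridAdj {m n : ℕ} (p q : Fin m × Fin n) : Prop :=
  (p.1 = q.1 ∧ p.2 ≠ q.2) ∨ (p.1 ≠ q.1 ∧ p.2 = q.2)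

/-- A red copy of `Γ_{a,b}` in an edge-coloring of `Γ_{N,N}`: a set `A` of `a` columns
and a set `B` of `b` rows such that all grid edges among the corresponding `a·b`
vertices are red (red = `true`). -/
def HasRedSubgrid (N a b : ℕ) (χ : Sym2 (Fin N × Fin N) → Bool) : Prop :=
  ∃ A B : Finset (Fin N), A.card = a ∧ B.card = b ∧
    (∀ x ∈ A, ∀ x' ∈ A, ∀ y ∈ B, x ≠ x' → χ s((x, y), (x', y)) = true) ∧
    (∀ x ∈ A, ∀ y ∈ B, ∀ y' ∈ B, y ≠ y' → χ s((x, y), (x, y')) = true)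

/-- A blue `K_n` in an edge-coloring of `Γ_{N,N}` (blue = `false`). -/
def HasBlueGridClique (N n : ℕ) (χ : Sym2 (Fin N × Fin N) → Bool) : Prop :=
  ∃ S : Finset (Fin N × Fin N), S.card = n ∧
    ∀ p ∈ S, ∀ q ∈ S, p ≠ q → GridAdj p q ∧ χ s(p, q) = false

/-- The grid Ramsey number `gr(Γ_{a,b}, K_n)`: the least `N` such that every red/blue
edge-coloring of `Γ_{N,N}` contains a red `Γ_{a,b}` or a blue `K_n`. -/
noncomputable def gridRamsey (a b n : ℕ) : ℕ :=
  sInf {N : ℕ | ∀ χ : Sym2 (Fin N × Fin N) → Bool,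
    HasRedSubgrid N a b χ ∨ HasBlueGridClique N n χ}

namespace GR
open Finset
open scoped Classical

/-- Independent finset. -/
def Ind {α : Type*} (G : SimpleGraph α) (S : Finset α) : Prop := ∀ x ∈ S, ∀ y ∈ S, ¬ G.Adj x y

/-- Clique of a relation. -/
def Clq {α : Type*} (R : α → α → Prop) (S : Finset α) : Prop := ∀ x ∈ S, ∀ y ∈ S, x ≠ y → R x y

lemma Ind.mono {α : Type*} {G : SimpleGraph α} {S T : Finset α} (h : Ind G S) (hT : T ⊆ S) :
    Ind G T := fun x hx y hy => h x (hT hx) y (hT hy)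

lemma Clq.insert {α : Type*} {R : α → α → Prop} (hs : ∀ x y, R x y → R y x) {S : Finset α} {x : α}
    (h : Clq R S) (hx : ∀ y ∈ S, R x y) : Clq R (insert x S) := by
  intro u hu v hv huv
  rw [mem_insert] at hu hv
  rcases hu with rfl | hu <;> rcases hv with rfl | hv
  · exact absurd rfl huv
  · exact hx _ hv
  · exact hs _ _ (hx _ hu)
  · exact h _ hu _ hv huv

lemma ramsey_pow {α : Type*} (G : SimpleGraph α) (n k : ℕ) (U : Finset α)
    (hind : ∀ S ⊆ U, S.card = n → ¬ Ind G S) (hc : n ^ k ≤ U.card) :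
    ∃ T ⊆ U, T.card = k ∧ Clq G.Adj T := by
  induction k generalizing U with
  | zero => exact ⟨∅, by simp, by simp, by intro x hx; simp at hx⟩
  | succ k ih =>
    obtain ⟨I, hI, hmax⟩ := Finset.exists_max_image (U.powerset.filter (fun S => Ind G S)) card
      ⟨∅, mem_filter.2 ⟨by simp, by intro x hx; simp at hx⟩⟩
    simp only [mem_filter, mem_powerset] at hI hmax
    have hlt : I.card < n := by
      by_contra h
      obtain ⟨S, hS, hSc⟩ := Finset.exists_subset_card_eq (not_lt.1 h)
      exact hind S (hS.trans hI.1) hSc (hI.2.mono hS)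
    have hcov : U ⊆ I.biUnion (fun x => insert x (U.filter (G.Adj x))) := by
      intro v hv
      rw [mem_biUnion]
      by_contra hcon
      push Not at hcon
      have hvI : v ∉ I := fun h => hcon v h (mem_insert_self _ _)
      have hva : ∀ x ∈ I, ¬ G.Adj x v := by
        intro x hx h
        exact hcon x hx (mem_insert_of_mem (by simp [hv, h]))
      have h1 : Ind G (insert v I) := by
        intro a ha c hc
        rw [mem_insert] at ha hc
        rcases ha with rfl | ha <;> rcases hc with rfl | hc
        · exact G.irrefl
        · exact fun h => hva _ hc h.symm
        · exact hva _ ha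
        · exact hI.2 _ ha _ hc
      have := hmax (insert v I) ⟨insert_subset hv hI.1, h1⟩
      rw [card_insert_of_notMem hvI] at this
      omega
    have hex : ∃ x ∈ I, n ^ k ≤ (U.filter (G.Adj x)).card := by
      by_contra hcon
      push Not at hcon
      have h1 : U.card ≤ I.card * n ^ k := by
        refine (card_le_card hcov).trans (card_biUnion_le_card_mul _ _ _ ?_)
        intro x hx
        exact (card_insert_le _ _).trans (hcon x hx)
      have h2 : I.card * n ^ k < n * n ^ k :=
        Nat.mul_lt_mul_of_pos_right hlt (Nat.pow_pos (by omega))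
      rw [pow_succ] at hc
      nlinarith
    obtain ⟨x, hx, hxd⟩ := hex
    obtain ⟨T, hT, hTc, hTq⟩ := ih (U.filter (G.Adj x))
      (fun S hS => hind S (hS.trans (filter_subset _ _))) hxd
    have hxT : x ∉ T := fun h => by simpa using (mem_filter.1 (hT h)).2
    refine ⟨insert x T, insert_subset (hI.1 hx) (hT.trans (filter_subset _ _)),
      by rw [card_insert_of_notMem hxT, hTc], ?_⟩
    exact hTq.insert (fun _ _ h => h.symm) (fun y hy => (mem_filter.1 (hT hy)).2)

lemma multi_ramsey {α ι : Type*} [Fintype ι] (hm : 2 ≤ Fintype.card ι)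
    (c : ι → α → α → Prop) (hs : ∀ i x y, c i x y → c i y x) (T : ℕ) (t : ι → ℕ)
    (hT : ∑ i, t i = T) (U : Finset α)
    (hcov : ∀ x ∈ U, ∀ y ∈ U, x ≠ y → ∃ i, c i x y) (hc : Fintype.card ι ^ T ≤ U.card) :
    ∃ i, ∃ S ⊆ U, S.card = t i ∧ Clq (c i) S := by
  induction T generalizing t U with
  | zero =>
    have : Nonempty ι := Fintype.card_pos_iff.1 (by omega)
    obtain ⟨i⟩ := this
    have : t i = 0 := by
      have := Finset.sum_eq_zero_iff.1 hT i (mem_univ _)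
      exact this
    exact ⟨i, ∅, by simp, by simp [this], by intro x hx; simp at hx⟩
  | succ T ih =>
    by_cases h0 : ∃ i, t i = 0
    · obtain ⟨i, hi⟩ := h0
      exact ⟨i, ∅, by simp, by simp [hi], by intro x hx; simp at hx⟩
    push Not at h0
    set m := Fintype.card ι with hmdef
    have hpos : 0 < m ^ (T + 1) := Nat.pow_pos (by omega)
    obtain ⟨x, hx⟩ : U.Nonempty := card_pos.1 (by omega)
    have hex : ∃ i, m ^ T ≤ ((U.erase x).filter (c i x)).card := by
      by_contra hcon
      push Not at hcon
      have h1 : U.erase x ⊆ (univ : Finset ι).biUnion (fun i => (U.erase x).filter (c i x)) := by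
        intro y hy
        obtain ⟨i, hi⟩ := hcov x hx y (mem_of_mem_erase hy) (ne_of_mem_erase hy).symm
        simp only [mem_biUnion, mem_univ, true_and, mem_filter]
        exact ⟨i, hy, hi⟩
      have h2 := (card_le_card h1).trans (card_biUnion_le_card_mul _ _ (m ^ T - 1)
        (fun i _ => Nat.le_sub_one_of_lt (hcon i)))
      rw [card_erase_of_mem hx, card_univ, ← hmdef, Nat.mul_sub, mul_one] at h2
      have hpos' : 0 < m ^ T := Nat.pow_pos (by omega)
      have h3 : m ^ (T + 1) = m * m ^ T := by ring
      have : m ≤ m * m ^ T := Nat.le_mul_of_pos_right _ hpos'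
      omega
    obtain ⟨i, hi⟩ := hex
    have hsum : ∑ j, Function.update t i (t i - 1) j = T := by
      rw [Finset.sum_update_of_mem (mem_univ i)]
      have := Finset.add_sum_erase univ t (mem_univ i)
      rw [← Finset.sdiff_singleton_eq_erase] at this
      have := h0 i
      omega
    obtain ⟨j, S, hS, hSc, hSq⟩ := ih (Function.update t i (t i - 1)) hsum
      ((U.erase x).filter (c i x))
      (fun u hu v hv => hcov u (mem_of_mem_erase (mem_filter.1 hu).1) v
        (mem_of_mem_erase (mem_filter.1 hv).1)) hi
    have hSU : S ⊆ U := hS.trans ((filter_subset _ _).trans (erase_subset _ _))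
    by_cases hj : j = i
    · subst hj
      have hxS : x ∉ S := fun h => by simpa using (mem_filter.1 (hS h)).1
      refine ⟨j, insert x S, insert_subset hx hSU, ?_, ?_⟩
      · rw [card_insert_of_notMem hxS, hSc, Function.update_self]
        have := h0 j
        omega
      · exact hSq.insert (hs j) (fun y hy => (mem_filter.1 (hS hy)).2)
    · exact ⟨j, S, hSU, by rw [hSc, Function.update_of_ne hj], hSq⟩

lemma card_small_subsets {α : Type*} (A : Finset α) (s : ℕ) :
    (A.powerset.filter (fun J => J.card ≤ s)).card ≤ (A.card + 1) ^ s := by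
  induction s with
  | zero =>
    have : A.powerset.filter (fun J => J.card ≤ 0) ⊆ {∅} := by
      intro J hJ
      simp at hJ
      simp [hJ.2]
    simpa using card_le_card this
  | succ s ih =>
    set P := A.powerset.filter (fun J => J.card ≤ s) with hP
    have : A.powerset.filter (fun J => J.card ≤ s + 1) ⊆
        P ∪ (A ×ˢ P).image (fun q => insert q.1 q.2) := by
      intro J hJ
      rw [mem_filter, mem_powerset] at hJ
      rw [mem_union]
      by_cases h : J.card ≤ s
      · left
        rw [hP, mem_filter, mem_powerset]
        exact ⟨hJ.1, h⟩
      · right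
        obtain ⟨x, hx⟩ : J.Nonempty := card_pos.1 (by omega)
        rw [mem_image]
        refine ⟨(x, J.erase x), ?_, by simp [insert_erase hx]⟩
        rw [mem_product, hP, mem_filter, mem_powerset, card_erase_of_mem hx]
        exact ⟨hJ.1 hx, (erase_subset _ _).trans hJ.1, by simp; omega⟩
    calc _ ≤ _ := card_le_card this
      _ ≤ P.card + A.card * P.card := by
        refine (card_union_le _ _).trans (Nat.add_le_add_left ?_ _)
        exact card_image_le.trans (by rw [card_product])
      _ = (A.card + 1) * P.card := by ring
      _ ≤ (A.card + 1) * (A.card + 1) ^ s := Nat.mul_le_mul_left _ ih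
      _ = _ := by ring

lemma erdos_szemeredi {α : Type*} (G : SimpleGraph α) (V : Finset α) (n r s : ℕ) (hs : 0 < s)
    (hnr : 2 * n ≤ r * s) (hM : 4 * (r * s) ≤ V.card)
    (hden : (∑ v ∈ V, (V.filter (G.Adj v)).card) * (32 * r) ≤ V.card ^ 2)
    (hind : ∀ S ⊆ V, S.card = n → ¬ Ind G S) :
    ∃ W ⊆ V, V.card ≤ 4 * (r * s + 1) ^ s * W.card ∧ ∀ S ⊆ W, S.card = s → ¬ Ind G S := by
  by_contra hcon
  push Not at hcon
  set M := V.card with hMdef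
  have key : ∀ i ≤ r, ∃ A B : Finset α, A ⊆ V ∧ A.card = i * s ∧ 2 * B.card ≤ i * s ∧
      Ind G (A \ B) ∧ ∀ u ∈ A, (V.filter (G.Adj u)).card * (8 * r) ≤ M := by
    intro i
    induction i with
    | zero =>
      intro _
      exact ⟨∅, ∅, by simp, by simp, by simp, by simp [Ind], by simp⟩
    | succ i ih =>
      intro hi
      obtain ⟨A, B, hA, hAc, hB, hAB, hdeg⟩ := ih (by omega)
      have hAr : A.card ≤ r * s := by rw [hAc]; exact Nat.mul_le_mul_right _ (by omega)
      set H1 := V.filter (fun v => M < (V.filter (G.Adj v)).card * (8 * r)) with hH1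
      set H2 := V.filter (fun v => s < 2 * (A.filter (G.Adj v)).card) with hH2
      have c1 : 4 * H1.card ≤ M := by
        have h1 : H1.card * M ≤ ∑ v ∈ V, (V.filter (G.Adj v)).card * (8 * r) := by
          calc H1.card * M = ∑ v ∈ H1, M := by simp
            _ ≤ ∑ v ∈ H1, (V.filter (G.Adj v)).card * (8 * r) :=
              sum_le_sum (fun v hv => (mem_filter.1 hv).2.le)
            _ ≤ _ := sum_le_sum_of_subset (filter_subset _ _)
        rw [← sum_mul] at h1
        rcases Nat.eq_zero_or_pos M with h0 | h0
        · have : H1.card ≤ M := card_le_card (filter_subset _ _)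
          omega
        · by_contra h
          push Not at h
          nlinarith
      have c2 : 4 * H2.card ≤ M := by
        have h1 : H2.card * s ≤ ∑ v ∈ V, 2 * (A.filter (G.Adj v)).card := by
          calc H2.card * s = ∑ v ∈ H2, s := by simp
            _ ≤ ∑ v ∈ H2, 2 * (A.filter (G.Adj v)).card :=
              sum_le_sum (fun v hv => (mem_filter.1 hv).2.le)
            _ ≤ _ := sum_le_sum_of_subset (filter_subset _ _)
        have h2 : ∑ v ∈ V, (A.filter (G.Adj v)).card = ∑ u ∈ A, (V.filter (G.Adj u)).card := by
          simp only [card_filter]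
          rw [sum_comm]
          simp only [G.adj_comm]
        rw [← mul_sum, h2] at h1
        have h3 : (∑ u ∈ A, (V.filter (G.Adj u)).card) * (8 * r) ≤ r * s * M := by
          rw [sum_mul]
          refine (sum_le_sum hdeg).trans ?_
          simp only [sum_const, smul_eq_mul]
          exact Nat.mul_le_mul_right _ hAr
        set D := ∑ u ∈ A, (V.filter (G.Adj u)).card
        have hr : 0 < r := by omega
        have h4 : D * 8 ≤ s * M := by
          have : r * (D * 8) ≤ r * (s * M) := by nlinarith
          exact Nat.le_of_mul_le_mul_left this hr
        have : s * (4 * H2.card) ≤ s * M := by nlinarith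
        exact Nat.le_of_mul_le_mul_left this hs
      set V' := V \ (A ∪ H1 ∪ H2) with hV'
      have c3 : M ≤ 4 * V'.card := by
        have h1 : V.card - (A ∪ H1 ∪ H2).card ≤ V'.card := le_card_sdiff _ _
        have h2 : (A ∪ H1 ∪ H2).card ≤ A.card + H1.card + H2.card :=
          (card_union_le _ _).trans (Nat.add_le_add_right (card_union_le _ _) _)
        omega
      have hV'm : ∀ v ∈ V', v ∈ V ∧ v ∉ A ∧ (V.filter (G.Adj v)).card * (8 * r) ≤ M ∧
          2 * (A.filter (G.Adj v)).card ≤ s := by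
        intro v hv
        simp only [hV', hH1, hH2, mem_sdiff, mem_union, mem_filter, not_or, not_and, not_lt] at hv
        exact ⟨hv.1, hv.2.1.1, hv.2.1.2 hv.1, hv.2.2 hv.1⟩
      set P := A.powerset.filter (fun J => J.card ≤ s) with hP
      have hPc : P.card ≤ (r * s + 1) ^ s :=
        (card_small_subsets A s).trans (Nat.pow_le_pow_left (by omega) _)
      have hmaps : ∀ v ∈ V', A.filter (G.Adj v) ∈ P := by
        intro v hv
        rw [hP, mem_filter, mem_powerset]
        exact ⟨filter_subset _ _, by have := (hV'm v hv).2.2.2; omega⟩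
      have hfib : ∃ J ∈ P, V'.card ≤ P.card * (V'.filter (fun v => A.filter (G.Adj v) = J)).card := by
        have hPne : P.Nonempty := ⟨∅, by simp [hP]⟩
        obtain ⟨J, hJ, hJm⟩ := exists_max_image P
          (fun J => (V'.filter (fun v => A.filter (G.Adj v) = J)).card) hPne
        refine ⟨J, hJ, ?_⟩
        rw [card_eq_sum_card_fiberwise (f := fun v => A.filter (G.Adj v)) (t := P) hmaps]
        refine (sum_le_card_nsmul _ _ _ hJm).trans (by simp)
      obtain ⟨J, hJ, hJc⟩ := hfib
      set W := V'.filter (fun v => A.filter (G.Adj v) = J) with hW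
      have hWV : W ⊆ V := (filter_subset _ _).trans sdiff_subset
      have hWc : M ≤ 4 * (r * s + 1) ^ s * W.card := by
        have := Nat.mul_le_mul_right W.card hPc
        nlinarith
      obtain ⟨I, hI, hIc, hIi⟩ := hcon W hWV hWc
      have hIm : ∀ v ∈ I, v ∈ V ∧ v ∉ A ∧ (V.filter (G.Adj v)).card * (8 * r) ≤ M ∧
          A.filter (G.Adj v) = J ∧ 2 * (A.filter (G.Adj v)).card ≤ s := by
        intro v hv
        have h1 := mem_filter.1 (hI hv)
        have h2 := hV'm v h1.1
        exact ⟨h2.1, h2.2.1, h2.2.2.1, h1.2, h2.2.2.2⟩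
      obtain ⟨v0, hv0⟩ : I.Nonempty := card_pos.1 (by omega)
      have hJs : 2 * J.card ≤ s := by
        have := hIm v0 hv0
        rw [this.2.2.2.1] at this
        exact this.2.2.2.2
      have hdis : Disjoint A I := by
        rw [disjoint_right]
        exact fun v hv => (hIm v hv).2.1
      refine ⟨A ∪ I, B ∪ J, union_subset hA (hI.trans hWV), ?_, ?_, ?_, ?_⟩
      · rw [card_union_of_disjoint hdis, hAc, hIc]; ring
      · have := card_union_le B J
        have h5 : (i + 1) * s = i * s + s := by ring
        omega
      · have cross : ∀ x ∈ I, ∀ y ∈ A, y ∉ J → ¬ G.Adj x y := by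
          intro x hx y hy hyJ h
          apply hyJ
          rw [← (hIm x hx).2.2.2.1]
          exact mem_filter.2 ⟨hy, h⟩
        intro x hx y hy
        simp only [mem_sdiff, mem_union, not_or] at hx hy
        rcases hx with ⟨hx | hx, hxB, hxJ⟩ <;> rcases hy with ⟨hy | hy, hyB, hyJ⟩
        · exact hAB x (mem_sdiff.2 ⟨hx, hxB⟩) y (mem_sdiff.2 ⟨hy, hyB⟩)
        · exact fun h => cross y hy x hx hxJ h.symm
        · exact cross x hx y hy hyJ
        · exact hIi x hx y hy
      · intro u hu
        rcases mem_union.1 hu with hu | hu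
        · exact hdeg u hu
        · exact (hIm u hu).2.2.1
  obtain ⟨A, B, hA, hAc, hB, hAB, -⟩ := key r le_rfl
  have h1 : n ≤ (A \ B).card := by
    have := le_card_sdiff B A
    omega
  obtain ⟨S, hS, hSc⟩ := exists_subset_card_eq h1
  exact hind S (hS.trans (sdiff_subset.trans hA)) hSc (hAB.mono hS)



lemma rows_bound {α β : Type*} (R : β → SimpleGraph α) (K : Finset β) (a b n r s : ℕ)
    (hb : 1 ≤ b) (hs : 0 < s) (hnr : 2 * n ≤ r * s) (hk : 32 * r * b + b ≤ K.card)
    (m p f : ℕ) (hm : p + f = m) (U : Finset α) (F : Finset β) (hF : F ⊆ K) (hFc : F.card + f = b)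
    (hFi : ∀ y ∈ F, ∀ S ⊆ U, S.card = s → ¬ Ind (R y) S)
    (hKi : ∀ y ∈ K, ∀ S ⊆ U, S.card = n → ¬ Ind (R y) S)
    (hac : ∀ B ∈ K.powersetCard b, ∀ S ⊆ U, S.card = a →
      ¬ Clq (fun x x' => ∀ y ∈ B, (R y).Adj x x') S)
    (w : Finset β → ℕ)
    (hwc : ∀ B ∈ K.powersetCard b, ∀ S ⊆ U, S.card = w B →
      ¬ Clq (fun x x' => ∀ y ∈ B, (R y).Adj x x') S)
    (hw : ∑ B ∈ K.powersetCard b, w B ≤ p) :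
    U.card < (K.card ^ (b + 1)) ^ p * (4 * (r * s + 1) ^ s) ^ f *
      ((b + 1) ^ (a + b * s) + 4 * (r * s)) := by
  induction m generalizing p f U F w with
  | zero =>
    have hp : p = 0 := by omega
    obtain ⟨B, hB⟩ : (K.powersetCard b).Nonempty := powersetCard_nonempty.2 (by omega)
    have h0 : w B = 0 := by
      have := single_le_sum (f := w) (fun i _ => Nat.zero_le _) hB
      omega
    exact absurd (by intro x hx; simp at hx) (hwc B hB ∅ (by simp) (by simp [h0]))
  | succ m ih =>
    set k := K.card with hkdef
    have hkpos : 0 < k := by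
      have : 0 ≤ 32 * r * b := Nat.zero_le _
      omega
    set Z := (b + 1) ^ (a + b * s) + 4 * (r * s) with hZ
    set Y := 4 * (r * s + 1) ^ s with hY
    have hYpos : 0 < Y := by positivity
    have hXpos : 0 < k ^ (b + 1) := by positivity
    by_cases hsmall : U.card < 4 * (r * s)
    · have h1 : 1 ≤ (k ^ (b + 1)) ^ p * Y ^ f := Nat.succ_le_of_lt (by positivity)
      calc U.card < 4 * (r * s) := hsmall
        _ ≤ Z := by omega
        _ ≤ (k ^ (b + 1)) ^ p * Y ^ f * Z := Nat.le_mul_of_pos_left _ h1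
    push Not at hsmall
    have hUpos : 0 ≤ U.card := Nat.zero_le _
    by_cases hdense : ∃ B ∈ K.powersetCard b, ∃ x ∈ U,
        U.card ≤ k ^ (b + 1) * (U.filter (fun x' => ∀ y ∈ B, (R y).Adj x x')).card
    · obtain ⟨B, hB, x, hx, hW⟩ := hdense
      set W := U.filter (fun x' => ∀ y ∈ B, (R y).Adj x x') with hWdef
      have hWU : W ⊆ U := filter_subset _ _
      have hBne : ∃ y, y ∈ B := by
        have := (mem_powersetCard.1 hB).2
        exact (card_pos.1 (by omega))
      have hwB : w B ≠ 0 := by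
        intro h0
        exact absurd (by intro x hx; simp at hx) (hwc B hB ∅ (by simp) (by simp [h0]))
      have hsum : ∑ B' ∈ K.powersetCard b, Function.update w B (w B - 1) B' ≤ p - 1 ∧ 1 ≤ p := by
        rw [Finset.sum_update_of_mem hB]
        have := Finset.add_sum_erase (K.powersetCard b) w hB
        rw [← Finset.sdiff_singleton_eq_erase] at this
        omega
      have := ih (p - 1) f (by omega) W F hF hFc (fun y hy S hS => hFi y hy S (hS.trans hWU))
        (fun y hy S hS => hKi y hy S (hS.trans hWU))
        (fun B hB S hS => hac B hB S (hS.trans hWU)) (Function.update w B (w B - 1))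
        (by
          intro B' hB' S hS hSc hSq
          by_cases hBB : B' = B
          · subst hBB
            rw [Function.update_self] at hSc
            have hxS : x ∉ S := by
              intro h
              obtain ⟨y, hy⟩ := hBne
              exact (R y).irrefl ((mem_filter.1 (hS h)).2 y hy)
            refine hwc B' hB (insert x S) (insert_subset hx (hS.trans hWU)) ?_ ?_
            · rw [card_insert_of_notMem hxS, hSc]; omega
            · exact hSq.insert (fun u v h y hy => (h y hy).symm)
                (fun y hy => (mem_filter.1 (hS hy)).2)
          · rw [Function.update_of_ne hBB] at hSc
            exact hwc B' hB' S (hS.trans hWU) hSc hSq) hsum.1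
      obtain ⟨q, rfl⟩ : ∃ q, p = q + 1 := ⟨p - 1, by omega⟩
      simp only [Nat.add_sub_cancel] at this
      calc U.card ≤ k ^ (b + 1) * W.card := hW
        _ < k ^ (b + 1) * ((k ^ (b + 1)) ^ q * Y ^ f * Z) := Nat.mul_lt_mul_of_pos_left this hXpos
        _ = _ := by ring
    push Not at hdense
    rcases Nat.eq_zero_or_pos f with hf | hf
    ·
      subst hf
      by_contra hbig
      push Not at hbig
      have hFm : F ∈ K.powersetCard b := mem_powersetCard.2 ⟨hF, by omega⟩
      have h1 : 1 ≤ (k ^ (b + 1)) ^ p * Y ^ 0 := Nat.succ_le_of_lt (by positivity)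
      have hUZ : (b + 1) ^ (a + b * s) ≤ U.card := by
        have := Nat.le_mul_of_pos_left Z h1
        omega
      have hcard : Fintype.card (Option {y // y ∈ F}) = b + 1 := by
        rw [Fintype.card_option, Fintype.card_coe]; omega
      let c : Option {y // y ∈ F} → α → α → Prop := fun o x x' =>
        match o with
        | none => ∀ y ∈ F, (R y).Adj x x'
        | some y => ¬ (R y.1).Adj x x'
      let t : Option {y // y ∈ F} → ℕ := fun o =>
        match o with
        | none => a
        | some _ => s
      obtain ⟨i, S, hS, hSc, hSq⟩ := multi_ramsey (by omega) c
        (by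
          intro i x y h
          cases i with
          | none => exact fun z hz => (h z hz).symm
          | some z => exact fun h' => h h'.symm) (a + b * s) t
        (by
          rw [Fintype.sum_option]
          simp only [t, sum_const, card_univ, Fintype.card_coe, smul_eq_mul]
          rw [show F.card = b by omega]) U
        (by
          intro x _ y _ _
          by_cases h : ∀ z ∈ F, (R z).Adj x y
          · exact ⟨none, h⟩
          · push Not at h
            obtain ⟨z, hz, h⟩ := h
            exact ⟨some ⟨z, hz⟩, h⟩)
        (by rw [hcard]; exact hUZ)
      cases i with
      | none => exact hac F hFm S hS hSc hSq
      | some z =>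
        refine hFi z.1 z.2 S hS hSc ?_
        intro x hx y hy h
        exact hSq x hx y hy h.ne h
    ·
      set M := U.card with hMdef
      have hsp : ∃ y ∈ K \ F, (∑ v ∈ U, (U.filter ((R y).Adj v)).card) * (32 * r) ≤ M ^ 2 := by
        by_contra hcon
        push Not at hcon
        have hpt : ∀ x ∈ U, ∀ x' ∈ U, ((K \ F).filter (fun y => (R y).Adj x x')).card ≤
            (b - 1) + k * ((K.powersetCard b).filter (fun B => ∀ y ∈ B, (R y).Adj x x')).card := by
          intro x _ x' _
          set C := (K \ F).filter (fun y => (R y).Adj x x') with hC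
          have hCK : C ⊆ K := (filter_subset _ _).trans sdiff_subset
          by_cases h : C.card ≤ b - 1
          · exact h.trans (Nat.le_add_right _ _)
          · obtain ⟨B, hB, hBc⟩ := exists_subset_card_eq (s := C) (n := b) (by omega)
            have hpos : 0 < ((K.powersetCard b).filter (fun B => ∀ y ∈ B, (R y).Adj x x')).card :=
              card_pos.2 ⟨B, mem_filter.2 ⟨mem_powersetCard.2 ⟨hB.trans hCK, hBc⟩,
                fun y hy => (mem_filter.1 (hB hy)).2⟩⟩
            have h2 : C.card ≤ k := card_le_card hCK
            have := Nat.le_mul_of_pos_right k hpos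
            omega
        have hsumL : ∑ y ∈ K \ F, ∑ v ∈ U, (U.filter ((R y).Adj v)).card ≤
            ∑ x ∈ U, ∑ x' ∈ U, ((b - 1) +
              k * ((K.powersetCard b).filter (fun B => ∀ y ∈ B, (R y).Adj x x')).card) := by
          rw [sum_comm]
          refine sum_le_sum (fun x hx => ?_)
          have : ∑ y ∈ K \ F, (U.filter ((R y).Adj x)).card =
              ∑ x' ∈ U, ((K \ F).filter (fun y => (R y).Adj x x')).card := by
            simp only [card_filter]
            rw [sum_comm]
          rw [this]
          exact sum_le_sum (fun x' hx' => hpt x hx x' hx')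
        have hsumR : ∑ x ∈ U, ∑ x' ∈ U, 
            k * ((K.powersetCard b).filter (fun B => ∀ y ∈ B, (R y).Adj x x')).card ≤ M ^ 2 := by
          have e1 : ∀ x ∈ U, ∑ x' ∈ U,
              k * ((K.powersetCard b).filter (fun B => ∀ y ∈ B, (R y).Adj x x')).card ≤ M := by
            intro x hx
            rw [← mul_sum]
            have : ∑ x' ∈ U, ((K.powersetCard b).filter (fun B => ∀ y ∈ B, (R y).Adj x x')).card
                = ∑ B ∈ K.powersetCard b, (U.filter (fun x' => ∀ y ∈ B, (R y).Adj x x')).card := by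
              simp only [card_filter]
              rw [sum_comm]
            rw [this]
            have h2 : k ^ (b + 1) * ∑ B ∈ K.powersetCard b,
                (U.filter (fun x' => ∀ y ∈ B, (R y).Adj x x')).card ≤ k ^ b * M := by
              rw [mul_sum]
              refine (sum_le_card_nsmul _ _ M (fun B hB => (hdense B hB x hx).le)).trans ?_
              rw [smul_eq_mul, card_powersetCard]
              exact Nat.mul_le_mul_right _ (Nat.choose_le_pow _ _)
            have h3 : k ^ b * (k * ∑ B ∈ K.powersetCard b,
                (U.filter (fun x' => ∀ y ∈ B, (R y).Adj x x')).card) ≤ k ^ b * M := by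
              rw [← mul_assoc, ← pow_succ]; exact h2
            exact Nat.le_of_mul_le_mul_left h3 (by positivity)
          refine (sum_le_card_nsmul _ _ M e1).trans ?_
          rw [smul_eq_mul, sq]
        have htot : ∑ y ∈ K \ F, ∑ v ∈ U, (U.filter ((R y).Adj v)).card ≤ b * M ^ 2 := by
          refine hsumL.trans ?_
          simp only [sum_add_distrib, sum_const, smul_eq_mul]
          rw [← hMdef]
          obtain ⟨b', rfl⟩ : ∃ b', b = b' + 1 := ⟨b - 1, by omega⟩
          simp only [Nat.add_sub_cancel]
          nlinarith
        have hcnt : 32 * r * b + 1 ≤ (K \ F).card := by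
          have := le_card_sdiff F K
          omega
        have hlow : (K \ F).card * (M ^ 2 + 1) ≤
            (∑ y ∈ K \ F, ∑ v ∈ U, (U.filter ((R y).Adj v)).card) * (32 * r) := by
          rw [sum_mul, ← smul_eq_mul]
          exact card_nsmul_le_sum _ _ _ (fun y hy => hcon y hy)
        have h7 := Nat.mul_le_mul_right (32 * r) htot
        have h8 := Nat.mul_le_mul_right (M ^ 2 + 1) hcnt
        nlinarith
      obtain ⟨y, hy, hyd⟩ := hsp
      rw [mem_sdiff] at hy
      obtain ⟨W, hWU, hWc, hWi⟩ := erdos_szemeredi (R y) U n r s hs hnr hsmall hyd (hKi y hy.1)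
      have := ih p (f - 1) (by omega) W (insert y F) (insert_subset hy.1 hF)
        (by rw [card_insert_of_notMem hy.2]; omega)
        (by
          intro z hz S hS
          rcases mem_insert.1 hz with rfl | hz
          · exact hWi S hS
          · exact hFi z hz S (hS.trans hWU))
        (fun y hy S hS => hKi y hy S (hS.trans hWU))
        (fun B hB S hS => hac B hB S (hS.trans hWU)) w
        (fun B hB S hS => hwc B hB S (hS.trans hWU)) hw
      obtain ⟨q, rfl⟩ : ∃ q, f = q + 1 := ⟨f - 1, by omega⟩
      simp only [Nat.add_sub_cancel] at this
      calc U.card ≤ Y * W.card := hWc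
        _ < Y * ((k ^ (b + 1)) ^ p * Y ^ q * Z) := Nat.mul_lt_mul_of_pos_left this hYpos
        _ = _ := by ring


/-- The set in the definition of the grid Ramsey number. -/
def GSet (a b n : ℕ) : Set ℕ := {N : ℕ | ∀ χ : Sym2 (Fin N × Fin N) → Bool,
    HasRedSubgrid N a b χ ∨ HasBlueGridClique N n χ}

lemma gset_mono (a b n N N' : ℕ) (h : N ≤ N') (hN : N ∈ GSet a b n) : N' ∈ GSet a b n := by
  intro χ
  let e : Fin N ↪ Fin N' := Fin.castLEEmb h
  rcases hN (fun z => χ (Sym2.map (Prod.map e e) z)) with ⟨A, B, hA, hB, h1, h2⟩ | ⟨S, hS, h1⟩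
  · left
    refine ⟨A.map e, B.map e, by simpa using hA, by simpa using hB, ?_, ?_⟩
    · intro x hx x' hx' y hy hne
      obtain ⟨x, hmx, rfl⟩ := mem_map.1 hx
      obtain ⟨x', hmx', rfl⟩ := mem_map.1 hx'
      obtain ⟨y, hmy, rfl⟩ := mem_map.1 hy
      exact h1 x hmx x' hmx' y hmy (fun hh => hne (by rw [hh]))
    · intro x hx y hy y' hy' hne
      obtain ⟨x, hmx, rfl⟩ := mem_map.1 hx
      obtain ⟨y', hmy', rfl⟩ := mem_map.1 hy'
      obtain ⟨y, hmy, rfl⟩ := mem_map.1 hy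
      exact h2 x hmx y hmy y' hmy' (fun hh => hne (by rw [hh]))
  · right
    refine ⟨S.map (e.prodMap e), by simpa using hS, ?_⟩
    intro p hp q hq hne
    obtain ⟨p, hmp, rfl⟩ := mem_map.1 hp
    obtain ⟨q, hmq, rfl⟩ := mem_map.1 hq
    obtain ⟨h3, h4⟩ := h1 p hmp q hmq (fun hh => hne (by rw [hh]))
    refine ⟨?_, h4⟩
    rcases h3 with ⟨h5, h6⟩ | ⟨h5, h6⟩
    · left
      exact ⟨congrArg e h5, fun hh => h6 (e.injective hh)⟩
    · right
      exact ⟨fun hh => h5 (e.injective hh), congrArg e h6⟩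

/-- Red graph of a row. -/
def rowG {N : ℕ} (χ : Sym2 (Fin N × Fin N) → Bool) (y : Fin N) : SimpleGraph (Fin N) where
  Adj x x' := x ≠ x' ∧ χ s((x, y), (x', y)) = true
  symm := ⟨fun x x' h => ⟨h.1.symm, by rw [Sym2.eq_swap]; exact h.2⟩⟩
  loopless := ⟨fun x h => h.1 rfl⟩

/-- Red graph of a column. -/
def colG {N : ℕ} (χ : Sym2 (Fin N × Fin N) → Bool) (x : Fin N) : SimpleGraph (Fin N) where
  Adj y y' := y ≠ y' ∧ χ s((x, y), (x, y')) = true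
  symm := ⟨fun x x' h => ⟨h.1.symm, by rw [Sym2.eq_swap]; exact h.2⟩⟩
  loopless := ⟨fun x h => h.1 rfl⟩

lemma row_noind {N n : ℕ} {χ : Sym2 (Fin N × Fin N) → Bool} (h : ¬ HasBlueGridClique N n χ)
    (y : Fin N) (S : Finset (Fin N)) (hS : S.card = n) : ¬ Ind (rowG χ y) S := by
  intro hi
  apply h
  refine ⟨S.image (fun x => (x, y)), ?_, ?_⟩
  · rw [card_image_of_injective _ (fun u v huv => (Prod.mk.inj huv).1), hS]
  · intro p hp q hq hne
    obtain ⟨u, hu, rfl⟩ := mem_image.1 hp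
    obtain ⟨v, hv, rfl⟩ := mem_image.1 hq
    have huv : u ≠ v := fun hh => hne (by rw [hh])
    refine ⟨Or.inr ⟨huv, rfl⟩, ?_⟩
    by_contra hcon
    exact hi u hu v hv ⟨huv, by simpa using hcon⟩

lemma col_noind {N n : ℕ} {χ : Sym2 (Fin N × Fin N) → Bool} (h : ¬ HasBlueGridClique N n χ)
    (x : Fin N) (S : Finset (Fin N)) (hS : S.card = n) : ¬ Ind (colG χ x) S := by
  intro hi
  apply h
  refine ⟨S.image (fun y => (x, y)), ?_, ?_⟩
  · rw [card_image_of_injective _ (fun u v huv => (Prod.mk.inj huv).2), hS]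
  · intro p hp q hq hne
    obtain ⟨u, hu, rfl⟩ := mem_image.1 hp
    obtain ⟨v, hv, rfl⟩ := mem_image.1 hq
    have huv : u ≠ v := fun hh => hne (by rw [hh])
    refine ⟨Or.inl ⟨rfl, huv⟩, ?_⟩
    by_contra hcon
    exact hi u hu v hv ⟨huv, by simpa using hcon⟩

lemma grid_upper (a b n r s k : ℕ) (hb : 1 ≤ b) (hn : 1 ≤ n) (hs : 0 < s)
    (hnr : 2 * n ≤ r * s) (hk : k = 32 * r * b + b) :
    (n ^ k) ^ k * ((k ^ (b + 1)) ^ (k ^ b * a) * (4 * (r * s + 1) ^ s) ^ b *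
      ((b + 1) ^ (a + b * s) + 4 * (r * s))) ∈ GSet a b n := by
  set Bd := ((k ^ (b + 1)) ^ (k ^ b * a) * (4 * (r * s + 1) ^ s) ^ b *
      ((b + 1) ^ (a + b * s) + 4 * (r * s))) with hBd
  have hkpos : 0 < k := by
    have : 0 ≤ 32 * r * b := Nat.zero_le _
    omega
  have hBpos : 0 < Bd := by positivity
  have hnk : 0 < n ^ k := by positivity
  obtain ⟨N, hN⟩ : ∃ N, N = (n ^ k) ^ k * Bd := ⟨_, rfl⟩
  rw [← hN]
  intro χ
  by_contra hcon
  push Not at hcon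
  obtain ⟨hred, hblue⟩ := hcon
  have hNk : n ^ k ≤ (univ : Finset (Fin N)).card := by
    rw [card_univ, Fintype.card_fin, hN]
    calc n ^ k ≤ (n ^ k) ^ k := Nat.le_self_pow hkpos.ne' _
      _ ≤ _ := Nat.le_mul_of_pos_right _ hBpos
  obtain ⟨V0, -, hV0⟩ := exists_subset_card_eq hNk
  have hT : ∀ x : Fin N, ∃ T ⊆ V0, T.card = k ∧ Clq (colG χ x).Adj T := fun x =>
    ramsey_pow (colG χ x) n k V0 (fun S _ hSc => col_noind hblue x S hSc) hV0.ge
  choose T hTV hTc hTq using hT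
  have hPne : (V0.powersetCard k).Nonempty := powersetCard_nonempty.2 (by
    rw [hV0]
    have hNpos : 0 < N := by rw [hN]; positivity
    rw [← hV0, ← hTc ⟨0, hNpos⟩]
    exact card_le_card (hTV _))
  obtain ⟨K, hK, hKm⟩ := exists_max_image (V0.powersetCard k)
    (fun K => ((univ : Finset (Fin N)).filter (fun x => T x = K)).card) hPne
  set U := (univ : Finset (Fin N)).filter (fun x => T x = K) with hU
  have hUc : N ≤ (n ^ k) ^ k * U.card := by
    have h1 : N = (univ : Finset (Fin N)).card := by simp
    refine h1.trans_le ?_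
    rw [card_eq_sum_card_fiberwise (f := T) (t := V0.powersetCard k)
      (fun x _ => mem_powersetCard.2 ⟨hTV x, hTc x⟩)]
    refine (sum_le_card_nsmul _ _ _ hKm).trans ?_
    rw [smul_eq_mul, card_powersetCard, hV0]
    exact Nat.mul_le_mul_right _ (Nat.choose_le_pow _ _)
  have hUB : Bd ≤ U.card := Nat.le_of_mul_le_mul_left (hN.symm.trans_le hUc) (by positivity)
  have hKc : K.card = k := (mem_powersetCard.1 hK).2
  have hac : ∀ B ∈ K.powersetCard b, ∀ S ⊆ U, S.card = a →
      ¬ Clq (fun x x' => ∀ y ∈ B, (rowG χ y).Adj x x') S := by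
    intro B hB S hS hSc hSq
    rw [mem_powersetCard] at hB
    apply hred
    refine ⟨S, B, hSc, hB.2, ?_, ?_⟩
    · intro x hx x' hx' y hy hne
      exact (hSq x hx x' hx' hne y hy).2
    · intro x hx y hy y' hy' hne
      have h1 : T x = K := (mem_filter.1 (hS hx)).2
      exact (hTq x y (h1 ▸ hB.1 hy) y' (h1 ▸ hB.1 hy') hne).2
  have := rows_bound (rowG χ) K a b n r s hb hs hnr (by omega) _ (k ^ b * a) b rfl U ∅
    (by simp) (by simp) (by simp) (fun y _ S _ hSc => row_noind hblue y S hSc) hac (fun _ => a) hac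
    (by
      rw [sum_const, smul_eq_mul, card_powersetCard, hKc]
      exact Nat.mul_le_mul_right _ (Nat.choose_le_pow _ _))
  rw [hKc] at this
  omega


/-- Existence of a good choice function, by counting. -/
lemma exists_good {V Y Ω : Type*} [Fintype V] [Fintype Y] [Fintype Ω] [Nonempty Ω]
    (P : Y → Sym2 V → Ω → Prop) (n D : ℕ) (hD : 1 ≤ D)
    (hP : ∀ y, ∀ x x' : V, x ≠ x' →
      Fintype.card Ω ≤ D * ((univ : Finset Ω).filter (fun o => P y s(x, x') o)).card)
    (hlt : (Fintype.card Y : ℝ) * (Fintype.card V : ℝ) ^ n *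
      (1 - 1 / (D : ℝ)) ^ (n.choose 2) < 1) :
    ∃ ω : Sym2 V → Ω, ∀ y, ∀ S : Finset V, S.card = n →
      ∃ x ∈ S, ∃ x' ∈ S, x ≠ x' ∧ P y s(x, x') (ω s(x, x')) := by
  by_contra hcon
  push Not at hcon
  set w : ℝ := (Fintype.card Ω : ℝ) with hw
  have hwpos : 0 < w := by
    rw [hw]; exact_mod_cast Fintype.card_pos
  set δ : ℝ := 1 - 1 / (D : ℝ) with hδ
  have hδ0 : 0 ≤ δ := by
    have : (1 : ℝ) ≤ D := by exact_mod_cast hD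
    rw [hδ, sub_nonneg, div_le_one (by positivity)]
    exact this
  let E : Finset V → Finset (Sym2 V) := fun S => S.offDiag.image Sym2.mk.uncurry
  let t : Y → Finset V → Sym2 V → Finset Ω := fun y S e =>
    if e ∈ E S then univ.filter (fun o => ¬ P y e o) else univ
  have hE : ∀ S : Finset V, S.card = n → (E S).card = n.choose 2 := by
    intro S hS
    rw [← hS]
    convert Sym2.card_image_offDiag S using 2
  have hEm : ∀ (S : Finset V) e, e ∈ E S → ∃ x ∈ S, ∃ x' ∈ S, x ≠ x' ∧ e = s(x, x') := by
    intro S e he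
    obtain ⟨⟨x, x'⟩, hx, rfl⟩ := mem_image.1 he
    rw [mem_offDiag] at hx
    exact ⟨x, hx.1, x', hx.2.1, hx.2.2, rfl⟩
  have hcard : ∀ y, ∀ S : Finset V, S.card = n →
      ((Fintype.piFinset (t y S)).card : ℝ) ≤
        δ ^ (n.choose 2) * w ^ (Fintype.card (Sym2 V)) := by
    intro y S hS
    rw [Fintype.card_piFinset]
    push_cast
    calc ∏ e, ((t y S e).card : ℝ) ≤ ∏ e, ((if e ∈ E S then δ else 1) * w) := by
          refine prod_le_prod (fun _ _ => by positivity) (fun e _ => ?_)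
          simp only [t]
          split_ifs with he
          · obtain ⟨x, -, x', -, hne, rfl⟩ := hEm S e he
            have h1 := hP y x x' hne
            have h2 := card_filter_add_card_filter_not (s := (univ : Finset Ω))
              (fun o => P y s(x, x') o)
            rw [card_univ] at h2
            have h1' : w ≤ D * ((univ.filter (fun o => P y s(x, x') o)).card : ℝ) := by
              rw [hw]; exact_mod_cast h1
            have h2' : ((univ.filter (fun o => P y s(x, x') o)).card : ℝ) +
              ((univ.filter (fun o => ¬ P y s(x, x') o)).card : ℝ) = w := by
              rw [hw]; exact_mod_cast h2
            have hDpos : (0 : ℝ) < D := by exact_mod_cast hD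
            have h3 : w / D ≤ ((univ.filter (fun o => P y s(x, x') o)).card : ℝ) := by
              rw [div_le_iff₀ hDpos]; linarith
            have : δ * w = w - w / D := by rw [hδ]; ring
            rw [this]
            linarith
          · rw [one_mul, card_univ]
      _ = δ ^ (n.choose 2) * w ^ (Fintype.card (Sym2 V)) := by
          rw [prod_mul_distrib, prod_ite]
          simp only [prod_const, one_pow, mul_one, card_univ]
          rw [filter_mem_eq_inter, univ_inter, hE S hS]
  have hcov : (univ : Finset (Sym2 V → Ω)) ⊆
      ((univ : Finset Y) ×ˢ (univ : Finset V).powersetCard n).biUnion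
        (fun q => Fintype.piFinset (t q.1 q.2)) := by
    intro ω _
    obtain ⟨y, S, hS, h⟩ := hcon ω
    rw [mem_biUnion]
    refine ⟨(y, S), ?_, ?_⟩
    · rw [mem_product, mem_powersetCard]
      exact ⟨mem_univ _, subset_univ _, hS⟩
    · rw [Fintype.mem_piFinset]
      intro e
      simp only [t]
      split_ifs with he
      · obtain ⟨x, hx, x', hx', hne, rfl⟩ := hEm S e he
        exact mem_filter.2 ⟨mem_univ _, h x hx x' hx' hne⟩
      · exact mem_univ _
  have h1 := (card_le_card hcov).trans card_biUnion_le
  have h2 : (w ^ (Fintype.card (Sym2 V)) : ℝ) ≤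
      ∑ q ∈ (univ : Finset Y) ×ˢ (univ : Finset V).powersetCard n,
        ((Fintype.piFinset (t q.1 q.2)).card : ℝ) := by
    rw [card_univ, Fintype.card_fun] at h1
    rw [hw]
    exact_mod_cast h1
  have h3 : (∑ q ∈ (univ : Finset Y) ×ˢ (univ : Finset V).powersetCard n,
        ((Fintype.piFinset (t q.1 q.2)).card : ℝ)) ≤
      ((Fintype.card Y : ℝ) * (Fintype.card V : ℝ) ^ n) *
        (δ ^ (n.choose 2) * w ^ (Fintype.card (Sym2 V))) := by
    refine (sum_le_card_nsmul _ _ (δ ^ (n.choose 2) * w ^ (Fintype.card (Sym2 V))) ?_).trans ?_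
    · intro q hq
      rw [mem_product, mem_powersetCard] at hq
      exact hcard q.1 q.2 hq.2.2
    · rw [nsmul_eq_mul, card_product, card_univ, card_powersetCard, card_univ]
      push_cast
      refine mul_le_mul_of_nonneg_right ?_ (by positivity)
      refine mul_le_mul_of_nonneg_left ?_ (by positivity)
      exact_mod_cast Nat.choose_le_pow _ _
  have hwp : 0 < w ^ (Fintype.card (Sym2 V)) := by positivity
  have h4 := h2.trans h3
  have h5 : 1 ≤ (Fintype.card Y : ℝ) * (Fintype.card V : ℝ) ^ n * δ ^ (n.choose 2) := by
    by_contra hh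
    push Not at hh
    nlinarith
  linarith

lemma same_line {N : ℕ} (S : Finset (Fin N × Fin N))
    (h : ∀ p ∈ S, ∀ q ∈ S, p ≠ q → GridAdj p q) :
    (∀ p ∈ S, ∀ q ∈ S, p.1 = q.1) ∨ (∀ p ∈ S, ∀ q ∈ S, p.2 = q.2) := by
  by_contra hcon
  push Not at hcon
  obtain ⟨⟨p, hp, q, hq, h1⟩, ⟨u, hu, v, hv, h2⟩⟩ := hcon
  have key : ∀ p ∈ S, ∀ q ∈ S, p.1 = q.1 ∨ p.2 = q.2 := by
    intro p hp q hq
    by_cases hpq : p = q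
    · left; rw [hpq]
    · rcases h p hp q hq hpq with h | h
      · exact Or.inl h.1
      · exact Or.inr h.2
  have key2 : ∀ p ∈ S, ∀ q ∈ S, p.1 ≠ q.1 → ∀ r ∈ S, r.2 = p.2 := by
    intro p hp q hq hne r hr
    have hpq2 : p.2 = q.2 := (key p hp q hq).resolve_left hne
    by_contra hc
    have h3 := (key r hr p hp).resolve_right hc
    have h4 := (key r hr q hq).resolve_right (fun hh => hc (hh.trans hpq2.symm))
    exact hne (h3.symm.trans h4)
  exact h2 ((key2 p hp q hq h1 u hu).trans (key2 p hp q hq h1 v hv).symm)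

/-- Assembling a grid coloring from row and column predicates. -/
lemma assemble {N n a b : ℕ} (hn : 0 < n) (ha : 2 ≤ a) (hb : 2 ≤ b)
    (A C : Fin N → Sym2 (Fin N) → Prop)
    (hrect : ∀ x x' y y' : Fin N, x ≠ x' → y ≠ y' → A y s(x, x') → A y' s(x, x') →
      C x s(y, y') → C x' s(y, y') → False)
    (hA : ∀ y, ∀ S : Finset (Fin N), S.card = n → ∃ x ∈ S, ∃ x' ∈ S, x ≠ x' ∧ A y s(x, x'))
    (hC : ∀ x, ∀ S : Finset (Fin N), S.card = n → ∃ y ∈ S, ∃ y' ∈ S, y ≠ y' ∧ C x s(y, y')) :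
    N ∉ GSet a b n := by
  intro hmem
  let χ : Sym2 (Fin N × Fin N) → Bool := fun e => decide (
    (∃ x x' y, x ≠ x' ∧ e = s((x, y), (x', y)) ∧ A y s(x, x')) ∨
    (∃ x y y', y ≠ y' ∧ e = s((x, y), (x, y')) ∧ C x s(y, y')))
  have e1 : ∀ x x' y, x ≠ x' → (χ s((x, y), (x', y)) = true ↔ A y s(x, x')) := by
    intro x x' y hne
    simp only [χ, decide_eq_true_eq]
    constructor
    · rintro (⟨u, u', v, -, he, h⟩ | ⟨u, v, v', hv, he, h⟩)
      · rw [Sym2.eq_iff] at he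
        simp only [Prod.mk.injEq] at he
        rcases he with ⟨⟨rfl, rfl⟩, ⟨rfl, -⟩⟩ | ⟨⟨rfl, rfl⟩, ⟨rfl, -⟩⟩
        · exact h
        · rw [Sym2.eq_swap]; exact h
      · rw [Sym2.eq_iff] at he
        simp only [Prod.mk.injEq] at he
        rcases he with ⟨⟨rfl, rfl⟩, ⟨rfl, -⟩⟩ | ⟨⟨rfl, rfl⟩, ⟨rfl, -⟩⟩
        · exact absurd rfl hne
        · exact absurd rfl hne
    · intro h
      exact Or.inl ⟨x, x', y, hne, rfl, h⟩
  have e2 : ∀ x y y', y ≠ y' → (χ s((x, y), (x, y')) = true ↔ C x s(y, y')) := by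
    intro x y y' hne
    simp only [χ, decide_eq_true_eq]
    constructor
    · rintro (⟨u, u', v, hu, he, h⟩ | ⟨u, v, v', hv, he, h⟩)
      · rw [Sym2.eq_iff] at he
        simp only [Prod.mk.injEq] at he
        rcases he with ⟨⟨rfl, rfl⟩, ⟨rfl, h5⟩⟩ | ⟨⟨rfl, rfl⟩, ⟨rfl, h5⟩⟩
        · exact absurd rfl hu
        · exact absurd rfl hu
      · rw [Sym2.eq_iff] at he
        simp only [Prod.mk.injEq] at he
        rcases he with ⟨⟨rfl, rfl⟩, ⟨-, rfl⟩⟩ | ⟨⟨rfl, rfl⟩, ⟨-, rfl⟩⟩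
        · exact h
        · rw [Sym2.eq_swap]; exact h
    · intro h
      exact Or.inr ⟨x, y, y', hne, rfl, h⟩
  rcases hmem χ with ⟨X, Y, hX, hY, h1, h2⟩ | ⟨S, hS, h⟩
  · obtain ⟨x, hx, x', hx', hxx⟩ := one_lt_card.1 (show 1 < X.card by omega)
    obtain ⟨y, hy, y', hy', hyy⟩ := one_lt_card.1 (show 1 < Y.card by omega)
    exact hrect x x' y y' hxx hyy ((e1 _ _ _ hxx).1 (h1 x hx x' hx' y hy hxx))
      ((e1 _ _ _ hxx).1 (h1 x hx x' hx' y' hy' hxx))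
      ((e2 _ _ _ hyy).1 (h2 x hx y hy y' hy' hyy))
      ((e2 _ _ _ hyy).1 (h2 x' hx' y hy y' hy' hyy))
  · obtain ⟨p0, hp0⟩ : S.Nonempty := card_pos.1 (by omega)
    rcases same_line S (fun p hp q hq hne => (h p hp q hq hne).1) with hl | hl
    · have hinj : Set.InjOn Prod.snd (S : Set (Fin N × Fin N)) := fun p hp q hq hh =>
        Prod.ext (hl p hp q hq) hh
      have hc : (S.image Prod.snd).card = n := by rw [card_image_of_injOn hinj, hS]
      obtain ⟨y, hy, y', hy', hne, hCC⟩ := hC p0.1 _ hc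
      obtain ⟨p, hp, rfl⟩ := mem_image.1 hy
      obtain ⟨q, hq, rfl⟩ := mem_image.1 hy'
      have h3 := (h p hp q hq (fun hh => hne (by rw [hh]))).2
      have h4 := (e2 p0.1 p.2 q.2 hne).2 hCC
      have hp1 : (p0.1, p.2) = p := Prod.ext (hl _ hp0 _ hp) rfl
      have hq1 : (p0.1, q.2) = q := Prod.ext (hl _ hp0 _ hq) rfl
      rw [hp1, hq1, h3] at h4
      simp at h4
    · have hinj : Set.InjOn Prod.fst (S : Set (Fin N × Fin N)) := fun p hp q hq hh =>
        Prod.ext hh (hl p hp q hq)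
      have hc : (S.image Prod.fst).card = n := by rw [card_image_of_injOn hinj, hS]
      obtain ⟨x, hx, x', hx', hne, hAA⟩ := hA p0.2 _ hc
      obtain ⟨p, hp, rfl⟩ := mem_image.1 hx
      obtain ⟨q, hq, rfl⟩ := mem_image.1 hx'
      have h3 := (h p hp q hq (fun hh => hne (by rw [hh]))).2
      have h4 := (e1 p.1 q.1 p0.2 hne).2 hAA
      have hp1 : (p.1, p0.2) = p := Prod.ext rfl (hl _ hp0 _ hp)
      have hq1 : (q.1, p0.2) = q := Prod.ext rfl (hl _ hp0 _ hq)
      rw [hp1, hq1, h3] at h4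
      simp at h4


lemma num_lower (N n k D : ℕ) (hk : 2 ≤ k) (hkk : k * (k + 1) ≤ 2 ^ k) (hn : 2 ^ (4 * k) ≤ n)
    (hD : 1 ≤ D) (hD2 : D ≤ 2 ^ (k + 1)) (hN : N ≤ 2 ^ (k * (k + 1))) :
    (N : ℝ) * (N : ℝ) ^ n * (1 - 1 / (D : ℝ)) ^ (n.choose 2) < 1 := by
  have hDr : (1 : ℝ) ≤ D := by exact_mod_cast hD
  have hD2r : (D : ℝ) ≤ 2 * 2 ^ k := by
    have : (D : ℝ) ≤ 2 ^ (k + 1) := by exact_mod_cast hD2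
    rw [pow_succ] at this; linarith
  set M : ℝ := 2 ^ k with hM
  have hM4 : 4 ≤ M := by
    calc (4 : ℝ) = 2 ^ 2 := by norm_num
      _ ≤ 2 ^ k := pow_le_pow_right₀ (by norm_num) hk
  have hnr : M ^ 4 ≤ n := by
    have : (2 : ℝ) ^ (4 * k) ≤ n := by exact_mod_cast hn
    rw [hM, ← pow_mul, mul_comm k 4]; exact this
  have h1 : (N : ℝ) ≤ Real.exp M := by
    calc (N : ℝ) ≤ 2 ^ (k * (k + 1)) := by exact_mod_cast hN
      _ ≤ 2 ^ (2 ^ k) := pow_le_pow_right₀ (by norm_num) hkk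
      _ ≤ (Real.exp 1) ^ (2 ^ k) := by
          refine pow_le_pow_left₀ (by norm_num) ?_ _
          have := Real.add_one_le_exp (1 : ℝ)
          linarith
      _ = Real.exp M := by
          rw [← Real.exp_nat_mul]
          congr 1
          rw [hM]; push_cast; ring
  have h2 : (N : ℝ) * (N : ℝ) ^ n ≤ Real.exp (M * (n + 1)) := by
    calc (N : ℝ) * (N : ℝ) ^ n = (N : ℝ) ^ (n + 1) := by ring
      _ ≤ (Real.exp M) ^ (n + 1) := pow_le_pow_left₀ (by positivity) h1 _
      _ = _ := by
          rw [← Real.exp_nat_mul]; congr 1; push_cast; ring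
  have h0 : 0 ≤ 1 - 1 / (D : ℝ) := by
    rw [sub_nonneg, div_le_one (by positivity)]; exact hDr
  have h3 : (1 - 1 / (D : ℝ)) ^ (n.choose 2) ≤ Real.exp (-(1 / D) * (n.choose 2)) := by
    calc (1 - 1 / (D : ℝ)) ^ (n.choose 2) ≤ (Real.exp (-(1 / D))) ^ (n.choose 2) := by
          refine pow_le_pow_left₀ h0 ?_ _
          have := Real.add_one_le_exp (-(1 / (D : ℝ)))
          linarith
      _ = _ := by rw [← Real.exp_nat_mul]; congr 1; ring
  have h4 : (N : ℝ) * (N : ℝ) ^ n * (1 - 1 / (D : ℝ)) ^ (n.choose 2) ≤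
      Real.exp (M * (n + 1) + -(1 / D) * (n.choose 2)) := by
    rw [Real.exp_add]
    exact mul_le_mul h2 h3 (by positivity) (by positivity)
  refine h4.trans_lt ?_
  rw [Real.exp_lt_one_iff, Nat.cast_choose_two]
  have h5 : M * (n + 1) * D < (n : ℝ) * (n - 1) / 2 := by
    have hM2 : 16 ≤ M ^ 2 := by nlinarith
    have h6 : 16 * M ^ 2 ≤ n := by nlinarith
    have h7 : M * (n + 1) * D ≤ M * (n + 1) * (2 * M) :=
      mul_le_mul_of_nonneg_left hD2r (by positivity)
    have hn0 : (256 : ℝ) ≤ n := by nlinarith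
    have h8 : 4 * M ^ 2 * (n + 1) < (n : ℝ) * (n - 1) := by nlinarith
    nlinarith
  have hDp : (0 : ℝ) < D := by linarith
  have h9 : M * (n + 1) < (n : ℝ) * (n - 1) / 2 / D := by
    rw [lt_div_iff₀ hDp]; exact h5
  have : -(1 / (D : ℝ)) * ((n : ℝ) * (n - 1) / 2) = -((n : ℝ) * (n - 1) / 2 / D) := by ring
  rw [this]; linarith

lemma exists_family (p k : ℕ) [Fact p.Prime] :
    ∃ f : ZMod p → Fin (p ^ k) → ZMod p, ∀ x x', x ≠ x' →
      ((univ : Finset (ZMod p)).filter (fun i => f i x = f i x')).card ≤ k := by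
  have hc : Fintype.card (Fin k → ZMod p) = p ^ k := by simp [ZMod.card]
  let e := (Fintype.equivFinOfCardEq hc).symm
  let g : Fin (p ^ k) → Polynomial (ZMod p) := fun x =>
    ((Polynomial.degreeLTEquiv (ZMod p) k).symm (e x) : Polynomial (ZMod p))
  have hginj : Function.Injective g := fun x x' h =>
    e.injective ((Polynomial.degreeLTEquiv (ZMod p) k).symm.injective (Subtype.ext h))
  have hdeg : ∀ x, (g x).degree < k := fun x =>
    Polynomial.mem_degreeLT.1 ((Polynomial.degreeLTEquiv (ZMod p) k).symm (e x)).2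
  refine ⟨fun i x => (g x).eval i, fun x x' hne => ?_⟩
  have hne0 : g x - g x' ≠ 0 := sub_ne_zero.2 (fun h => hne (hginj h))
  have hd : (g x - g x').natDegree ≤ k := by
    refine Polynomial.natDegree_le_of_degree_le ?_
    refine (Polynomial.degree_sub_le _ _).trans ?_
    exact max_le (hdeg x).le (hdeg x').le
  calc _ ≤ (g x - g x').roots.toFinset.card := by
        refine card_le_card (fun i hi => ?_)
        rw [mem_filter] at hi
        rw [Multiset.mem_toFinset, Polynomial.mem_roots hne0, Polynomial.IsRoot, Polynomial.eval_sub,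
          sub_eq_zero]
        exact hi.2
    _ ≤ Multiset.card (g x - g x').roots := Multiset.toFinset_card_le _
    _ ≤ (g x - g x').natDegree := Polynomial.card_roots' _
    _ ≤ k := hd

lemma count_agree {I : Type*} [Fintype I] (k : ℕ) (E : I → Prop) (v : I → Bool)
    (hE : ((univ : Finset I).filter E).card ≤ k) :
    Fintype.card (I → Bool) ≤
      2 ^ k * ((univ : Finset (I → Bool)).filter (fun z => ∀ i, E i → v i = z i)).card := by
  have h1 : (univ : Finset (I → Bool)).filter (fun z => ∀ i, E i → v i = z i) =
      Fintype.piFinset (fun i => if E i then {v i} else (univ : Finset Bool)) := by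
    ext z
    simp only [mem_filter, mem_univ, true_and, Fintype.mem_piFinset]
    refine forall_congr' (fun i => ?_)
    by_cases h : E i
    · simp [h, eq_comm]
    · simp [h]
  rw [h1, Fintype.card_piFinset, Fintype.card_fun]
  have h2 : ∀ i, (if E i then ({v i} : Finset Bool) else univ).card = if E i then 1 else 2 := by
    intro i; split_ifs <;> simp
  simp only [h2]
  rw [prod_ite, prod_const_one, one_mul, prod_const, Fintype.card_bool]
  have h3 := card_filter_add_card_filter_not (s := (univ : Finset I)) E
  rw [card_univ] at h3
  rw [← h3, pow_add]
  exact Nat.mul_le_mul_right _ (Nat.pow_le_pow_right (by norm_num) hE)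

lemma lower_core (a b n k p : ℕ) [hp : Fact p.Prime] (ha : 2 ≤ a) (hb : 2 ≤ b) (hk : 2 ≤ k)
    (hp1 : 2 ^ k < p) (hp2 : p ≤ 2 ^ (k + 1)) (hkk : k * (k + 1) ≤ 2 ^ k)
    (hn : 2 ^ (4 * k) ≤ n) : p ^ k ∉ GSet a b n := by
  have hn0 : 0 < n := lt_of_lt_of_le (by positivity) hn
  have hNb : p ^ k ≤ 2 ^ (k * (k + 1)) := by
    rw [mul_comm, pow_mul]
    exact Nat.pow_le_pow_left hp2 k
  obtain ⟨f, hf⟩ := exists_family p k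
  have hcard : Fintype.card (Fin (p ^ k)) ≤ Fintype.card (ZMod p → Bool) := by
    rw [Fintype.card_fin, Fintype.card_fun, ZMod.card, Fintype.card_bool]
    exact hNb.trans (Nat.pow_le_pow_right (by norm_num) (hkk.trans hp1.le))
  obtain ⟨yv⟩ := Function.Embedding.nonempty_of_card_le hcard
  have key : ∀ y y' : Fin (p ^ k), y ≠ y' → ∃ i, yv y i ≠ yv y' i := by
    intro y y' hne
    by_contra hcon
    push Not at hcon
    exact hne (yv.injective (funext hcon))
  let P1 : Fin (p ^ k) → Sym2 (Fin (p ^ k)) → (ZMod p → Bool) → Prop := fun y e z =>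
    ∀ x x', e = s(x, x') → ∀ i, f i x = f i x' → yv y i = z i
  have hP1 : ∀ y x x' z, P1 y s(x, x') z ↔ ∀ i, f i x = f i x' → yv y i = z i := by
    intro y x x' z
    constructor
    · intro h
      exact h x x' rfl
    · intro h u u' he i hi
      rcases Sym2.eq_iff.1 he with ⟨rfl, rfl⟩ | ⟨rfl, rfl⟩
      · exact h i hi
      · exact h i hi.symm
  obtain ⟨ω, hω⟩ := exists_good P1 n (2 ^ k) Nat.one_le_two_pow (by
      intro y x x' hne
      simp only [hP1]
      have h1 := count_agree k (fun i => f i x = f i x') (yv y) (by convert hf x x' hne)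
      convert h1)
    (by
      rw [Fintype.card_fin]
      exact num_lower _ n k _ hk hkk hn Nat.one_le_two_pow
        (Nat.pow_le_pow_right (by norm_num) (Nat.le_succ k)) hNb)
  have hδ : ∀ e : Sym2 (Fin (p ^ k)), ∃ i : ZMod p, ∀ y y', y ≠ y' → e = s(y, y') →
      yv y i ≠ yv y' i := by
    intro e
    induction e using Sym2.ind with
    | _ u v =>
      by_cases huv : u = v
      · refine ⟨0, fun y y' hne he => ?_⟩
        rcases Sym2.eq_iff.1 he with ⟨rfl, rfl⟩ | ⟨rfl, rfl⟩
        · exact absurd huv hne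
        · exact absurd huv.symm hne
      · obtain ⟨i, hi⟩ := key u v huv
        refine ⟨i, fun y y' hne he => ?_⟩
        rcases Sym2.eq_iff.1 he with ⟨rfl, rfl⟩ | ⟨rfl, rfl⟩
        · exact hi
        · exact hi.symm
  choose δ hδ using hδ
  obtain ⟨h, hh⟩ := exists_good (V := Fin (p ^ k)) (Y := Fin (p ^ k)) (Ω := ZMod p)
    (fun x e o => f (δ e) x = o) n p hp.out.one_lt.le (by
      intro y x x' hne
      have : (univ : Finset (ZMod p)).filter (fun o => f (δ s(x, x')) y = o) =
          {f (δ s(x, x')) y} := by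
        ext o; simp [eq_comm]
      have h1 : ((univ : Finset (ZMod p)).filter (fun o => f (δ s(x, x')) y = o)).card = 1 := by
        rw [this, card_singleton]
      rw [ZMod.card]
      refine le_of_eq ?_
      symm
      convert mul_one p
      convert h1)
    (by
      rw [Fintype.card_fin]
      exact num_lower _ n k _ hk hkk hn hp.out.one_lt.le hp2 hNb)
  refine assemble hn0 ha hb (fun y e => P1 y e (ω e)) (fun x e => f (δ e) x = h e) ?_ hω hh
  intro x x' y y' hx hy h1 h2 h3 h4
  have h5 := (hP1 _ _ _ _).1 h1 _ (h3.trans h4.symm)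
  have h6 := (hP1 _ _ _ _).1 h2 _ (h3.trans h4.symm)
  exact hδ s(y, y') y y' hy rfl (h5.trans h6.symm)

lemma lower_bound (a b n : ℕ) (ha : 2 ≤ a) (hb : 2 ≤ b) (hn : 2 ^ 20 ≤ n)
    (hne : (GSet a b n).Nonempty) :
    (2 : ℝ) ^ ((1 / 64 : ℝ) * (Real.logb 2 n) ^ 2) ≤ (gridRamsey a b n : ℝ) := by
  have hn0 : n ≠ 0 := by rintro rfl; norm_num at hn
  set l := Nat.log 2 n with hl
  have hl20 : 20 ≤ l := Nat.le_log_of_pow_le (by norm_num) hn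
  set k := l / 4 with hk
  have hk5 : 5 ≤ k := by omega
  have hkk : k * (k + 1) ≤ 2 ^ k := by
    clear_value k
    clear hk
    induction k, hk5 using Nat.le_induction with
    | base => norm_num
    | succ m hm ih => rw [pow_succ]; nlinarith
  have hnk : 2 ^ (4 * k) ≤ n :=
    (Nat.pow_le_pow_right (by norm_num) (by omega)).trans (Nat.pow_log_le_self 2 hn0)
  obtain ⟨p, hp, hp1, hp2⟩ := Nat.exists_prime_lt_and_le_two_mul (2 ^ k) (by positivity)
  have : Fact p.Prime := ⟨hp⟩
  have hnot := lower_core a b n k p ha hb (by omega) hp1 (by rw [pow_succ]; omega) hkk hnk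
  have hle : p ^ k ≤ gridRamsey a b n := by
    by_contra hcon
    push Not at hcon
    exact hnot (gset_mono a b n _ _ hcon.le (Nat.sInf_mem hne))
  have h1 : (2 : ℝ) ^ (k * k) ≤ (gridRamsey a b n : ℝ) := by
    have : 2 ^ (k * k) ≤ gridRamsey a b n := by
      rw [pow_mul]
      exact (Nat.pow_le_pow_left hp1.le k).trans hle
    exact_mod_cast this
  refine le_trans ?_ h1
  rw [← Real.rpow_natCast 2 (k * k)]
  refine Real.rpow_le_rpow_of_exponent_le one_le_two ?_
  have hnpos : (0 : ℝ) < n := by positivity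
  have hlog : Real.logb 2 n ≤ l + 1 := by
    rw [Real.logb_le_iff_le_rpow (by norm_num) hnpos]
    have := (Nat.lt_pow_succ_log_self (b := 2) (by norm_num) n).le
    have h2 : (n : ℝ) ≤ 2 ^ (l + 1) := by exact_mod_cast this
    rw [← Real.rpow_natCast] at h2
    push_cast at h2
    exact h2
  have hlog0 : 0 ≤ Real.logb 2 n := by
    apply Real.logb_nonneg (by norm_num)
    exact_mod_cast Nat.one_le_iff_ne_zero.2 hn0
  have hlk : ((l : ℝ) + 1) ≤ 8 * k := by
    have : l + 1 ≤ 8 * k := by omega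
    exact_mod_cast this
  push_cast
  nlinarith

lemma num_upper_nat (a b n r s k : ℕ) (hn16 : 16 ≤ n) (hbn : b + 1 ≤ n)
    (hrs : r * s ≤ 4 * n) (hkn : k ≤ n ^ 2) :
    (n ^ k) ^ k * ((k ^ (b + 1)) ^ (k ^ b * a) * (4 * (r * s + 1) ^ s) ^ b *
      ((b + 1) ^ (a + b * s) + 4 * (r * s))) ≤
      n ^ (k * k + (2 * (b + 1) * (k ^ b * a) + (1 + 2 * s) * b + (a + b * s + 3))) := by
  have h1 : (n ^ k) ^ k = n ^ (k * k) := by rw [← pow_mul]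
  have h2 : (k ^ (b + 1)) ^ (k ^ b * a) ≤ n ^ (2 * (b + 1) * (k ^ b * a)) := by
    rw [pow_mul n, pow_mul n]
    exact Nat.pow_le_pow_left (Nat.pow_le_pow_left hkn _) _
  have h3 : (4 * (r * s + 1) ^ s) ^ b ≤ n ^ ((1 + 2 * s) * b) := by
    rw [pow_mul n, pow_add, pow_one, pow_mul n]
    refine Nat.pow_le_pow_left (Nat.mul_le_mul (by omega) (Nat.pow_le_pow_left ?_ _)) _
    nlinarith
  have h4 : (b + 1) ^ (a + b * s) + 4 * (r * s) ≤ n ^ (a + b * s + 3) := by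
    have h5 : (b + 1) ^ (a + b * s) ≤ n ^ (a + b * s) := Nat.pow_le_pow_left hbn _
    have h6 : 1 ≤ n ^ (a + b * s) := Nat.one_le_pow _ _ (by omega)
    rw [pow_add n (a + b * s) 3]
    set w := n ^ (a + b * s)
    have h7 : 4 * (r * s) ≤ n ^ 2 := by nlinarith
    have h8 : n ^ 2 + 1 ≤ n ^ 3 := by nlinarith
    nlinarith
  rw [h1, pow_add n (k * k), pow_add n _ (a + b * s + 3), pow_add n _ ((1 + 2 * s) * b)]
  exact Nat.mul_le_mul_left _ (Nat.mul_le_mul (Nat.mul_le_mul h2 h3) h4)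

/-- The constant in the upper bound. -/
noncomputable def cst (a b : ℕ) : ℝ :=
  (65 * (b : ℝ)) ^ 2 + 2 * (b + 1) * a * (65 * (b : ℝ)) ^ b + 7 * b + a + 3 * b + 3

lemma upper_bound (a b n : ℕ) (hb : 2 ≤ b) (hn : 65 * b + 16 ≤ n) :
    (GSet a b n).Nonempty ∧ (gridRamsey a b n : ℝ) ≤
      (2 : ℝ) ^ (cst a b * (n : ℝ) ^ (1 - ((2 : ℝ) ^ b - 1)⁻¹) * Real.logb 2 n) := by
  have hn1 : (1 : ℝ) ≤ n := by
    have : 1 ≤ n := by omega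
    exact_mod_cast this
  set t : ℝ := (n : ℝ) ^ (((b + 1 : ℕ) : ℝ)⁻¹) with ht
  have ht1 : 1 ≤ t := Real.one_le_rpow hn1 (by positivity)
  have htn : t ^ (b + 1) = n := Real.rpow_inv_natCast_pow (by positivity) (by omega)
  set r := ⌈t⌉₊ with hr
  have hr1 : t ≤ r := Nat.le_ceil t
  have hr2 : (r : ℝ) ≤ 2 * t := by
    have := (Nat.ceil_lt_add_one (by linarith : 0 ≤ t)).le
    linarith
  have hrpos : (0 : ℝ) < r := by linarith
  set E : ℝ := t ^ b with hE
  have hE1 : 1 ≤ E := one_le_pow₀ ht1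
  have hnE : (n : ℝ) = E * t := by rw [← htn, pow_succ]
  set s := ⌈2 * (n : ℝ) / r⌉₊ with hs
  have hs1 : 2 * (n : ℝ) / r ≤ s := Nat.le_ceil _
  have hs2 : (s : ℝ) ≤ 2 * (n : ℝ) / r + 1 := (Nat.ceil_lt_add_one (by positivity)).le
  have hspos : 0 < s := Nat.ceil_pos.2 (by positivity)
  have hs3 : (s : ℝ) ≤ 3 * E := by
    have : 2 * (n : ℝ) / r ≤ 2 * E := by
      rw [div_le_iff₀ hrpos, hnE]
      nlinarith
    linarith
  have hnr : 2 * n ≤ r * s := by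
    rw [div_le_iff₀ hrpos] at hs1
    have : 2 * (n : ℝ) ≤ r * s := by linarith
    exact_mod_cast this
  have htlen : t ≤ n := by rw [hnE]; nlinarith
  have hrs : r * s ≤ 4 * n := by
    have h1 : (r : ℝ) * s ≤ r * (2 * (n : ℝ) / r + 1) := mul_le_mul_of_nonneg_left hs2 hrpos.le
    have h2 : (r : ℝ) * (2 * (n : ℝ) / r + 1) = 2 * n + r := by field_simp
    have : (r : ℝ) * s ≤ 4 * n := by linarith
    exact_mod_cast this
  set k := 32 * r * b + b with hk
  have hb0 : (2 : ℝ) ≤ b := by exact_mod_cast hb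
  have hkt : (k : ℝ) ≤ 65 * b * t := by
    rw [hk]; push_cast
    nlinarith
  have hkn : k ≤ n ^ 2 := by
    have h1 : (65 * b : ℝ) ≤ n := by
      have : 65 * b ≤ n := by omega
      exact_mod_cast this
    have : (k : ℝ) ≤ (n : ℝ) ^ 2 := by
      calc (k : ℝ) ≤ 65 * b * t := hkt
        _ ≤ n * n := mul_le_mul h1 htlen (by linarith) (by linarith)
        _ = _ := by ring
    exact_mod_cast this
  have hmem := grid_upper a b n r s k (by omega) (by omega) hspos hnr hk
  refine ⟨⟨_, hmem⟩, ?_⟩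
  have h1 : gridRamsey a b n ≤ _ :=
    (Nat.sInf_le hmem).trans (num_upper_nat a b n r s k (by omega) (by omega) hrs hkn)
  set T := k * k + (2 * (b + 1) * (k ^ b * a) + (1 + 2 * s) * b + (a + b * s + 3)) with hT
  have hk2 : (k : ℝ) * k ≤ (65 * b) ^ 2 * E := by
    calc (k : ℝ) * k ≤ (65 * b * t) * (65 * b * t) :=
          mul_le_mul hkt hkt (by positivity) (by positivity)
      _ = (65 * b) ^ 2 * t ^ 2 := by ring
      _ ≤ (65 * b) ^ 2 * E := mul_le_mul_of_nonneg_left (pow_le_pow_right₀ ht1 hb) (by positivity)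
  have hkb : (k : ℝ) ^ b ≤ (65 * b) ^ b * E := by
    rw [hE, ← mul_pow]
    exact pow_le_pow_left₀ (by positivity) hkt _
  have hTE : (T : ℝ) ≤ cst a b * E := by
    rw [hT, cst]; push_cast
    have h2 : 2 * ((b : ℝ) + 1) * ((k : ℝ) ^ b * a) ≤ 2 * (b + 1) * a * (65 * (b : ℝ)) ^ b * E := by
      calc 2 * ((b : ℝ) + 1) * ((k : ℝ) ^ b * a) = 2 * ((b : ℝ) + 1) * a * (k : ℝ) ^ b := by ring
        _ ≤ 2 * ((b : ℝ) + 1) * a * ((65 * b) ^ b * E) :=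
          mul_le_mul_of_nonneg_left hkb (by positivity)
        _ = _ := by ring
    have h3 : (1 + 2 * (s : ℝ)) * b ≤ 7 * b * E := by nlinarith
    have h4 : (b : ℝ) * s ≤ 3 * b * E := by nlinarith
    have ha0 : (0 : ℝ) ≤ a := by positivity
    have h5 : (a : ℝ) ≤ a * E := by nlinarith
    linarith
  have hEle : E ≤ (n : ℝ) ^ (1 - ((2 : ℝ) ^ b - 1)⁻¹) := by
    rw [hE, ht, ← Real.rpow_natCast, ← Real.rpow_mul (by positivity)]
    refine Real.rpow_le_rpow_of_exponent_le hn1 ?_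
    have h6 : b + 2 ≤ 2 ^ b := by
      clear * - hb
      induction b, hb using Nat.le_induction with
      | base => norm_num
      | succ m hm ih => rw [pow_succ]; omega
    have h7 : (b : ℝ) + 2 ≤ 2 ^ b := by exact_mod_cast h6
    have h8 : ((2 : ℝ) ^ b - 1)⁻¹ ≤ ((b : ℝ) + 1)⁻¹ := by
      apply inv_anti₀ <;> linarith
    have h9 : (((b + 1 : ℕ) : ℝ)⁻¹) * b = 1 - ((b : ℝ) + 1)⁻¹ := by
      push_cast
      field_simp
      ring
    rw [h9]; linarith
  have hc0 : 0 ≤ cst a b := by unfold cst; positivity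
  have hlog0 : 0 ≤ Real.logb 2 n := Real.logb_nonneg (by norm_num) hn1
  calc (gridRamsey a b n : ℝ) ≤ (n : ℝ) ^ T := by exact_mod_cast h1
    _ = ((2 : ℝ) ^ (Real.logb 2 n)) ^ T := by
        rw [Real.rpow_logb (by norm_num) (by norm_num) (by linarith)]
    _ = (2 : ℝ) ^ (Real.logb 2 n * T) := by
        rw [Real.rpow_mul (by norm_num), Real.rpow_natCast]
    _ ≤ _ := by
        refine Real.rpow_le_rpow_of_exponent_le one_le_two ?_
        rw [mul_comm]
        refine mul_le_mul_of_nonneg_right (hTE.trans ?_) hlog0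
        exact mul_le_mul_of_nonneg_left hEle hc0

end GR

/-- There is `c > 0` and, for each `a ≥ b ≥ 2`, a `c'_a > 0` such that for all
sufficiently large `n`:
`2^(c (log₂ n)²) ≤ gr(Γ_{a,b}, K_n) ≤ 2^(c'_a n^(1 - 1/(2^b - 1)) log₂ n)`. -/
theorem general_grid_ramsey_bounds :
    ∃ c : ℝ, 0 < c ∧ ∀ a b : ℕ, 2 ≤ b → b ≤ a →
      ∃ c' : ℝ, 0 < c' ∧ ∃ n₀ : ℕ, ∀ n : ℕ, n₀ ≤ n →
        (2 : ℝ) ^ (c * (Real.logb 2 n) ^ 2) ≤ (gridRamsey a b n : ℝ) ∧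
        (gridRamsey a b n : ℝ) ≤
          (2 : ℝ) ^ (c' * (n : ℝ) ^ (1 - ((2 : ℝ) ^ b - 1)⁻¹) * Real.logb 2 n) := by
  refine ⟨1 / 64, by norm_num, fun a b hb hab => ⟨GR.cst a b, ?_, 65 * b + 2 ^ 20, ?_⟩⟩
  · unfold GR.cst
    positivity
  · intro n hn
    obtain ⟨hne, hup⟩ := GR.upper_bound a b n hb (by omega)
    exact ⟨GR.lower_bound a b n (hb.trans hab) hb (by omega) hne, hup⟩
end

section
/- For all positive integers N and n ≥ 2: if every red/blue edge-coloring of Γ_{N,N} contains a red copy of Γ_{3,2} or a blue K_n, then every 2-coloring of K_{2N}^(3) contains a red copy of K_5^(3) − e or a blue copy of S_n. Consequently, r(K_5^(3) − e, S_n) ≤ 2·gr(Γ_{3,2}, K_n). -/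
/-- A red copy of `K₅⁽³⁾ − e`: a 5-element vertex set with at least nine of its ten
3-element subsets red (red = `true`). -/
def HasRedK5e (N : ℕ) (χ : Finset (Fin N) → Bool) : Prop :=
  ∃ S : Finset (Fin N), S.card = 5 ∧
    9 ≤ ((S.powersetCard 3).filter fun T => χ T = true).card

/-- A blue copy of the star `Sₙ` (blue = `false`). -/
def HasBlueStar (N n : ℕ) (χ : Finset (Fin N) → Bool) : Prop :=
  ∃ v : Fin N, ∃ S : Finset (Fin N), v ∉ S ∧ S.card = n ∧
    ∀ a ∈ S, ∀ b ∈ S, a ≠ b → χ {v, a, b} = false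

/-- The Ramsey number `r(K₅⁽³⁾ − e, Sₙ)`. -/
noncomputable def ramseyK5eStar (n : ℕ) : ℕ :=
  sInf {N : ℕ | ∀ χ : Finset (Fin N) → Bool, HasRedK5e N χ ∨ HasBlueStar N n χ}

/-- The grid Ramsey number `gr(Γ₃,₂, K_n)`. -/
noncomputable def gridRamsey32 (n : ℕ) : ℕ :=
  sInf {N : ℕ | ∀ χ : Sym2 (Fin N × Fin N) → Bool,
    HasRedSubgrid N 3 2 χ ∨ HasBlueGridClique N n χ}


theorem aux_ramsey (s t : ℕ) : ∃ R : ℕ, ∀ (α : Type) (_ : DecidableEq α) (r : α → α → Bool)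
    (_ : ∀ x y, r x y = r y x) (S : Finset α), R ≤ S.card →
    (∃ A ⊆ S, A.card = s ∧ ∀ x ∈ A, ∀ y ∈ A, x ≠ y → r x y = true) ∨
    (∃ A ⊆ S, A.card = t ∧ ∀ x ∈ A, ∀ y ∈ A, x ≠ y → r x y = false) := by
  induction s generalizing t with
  | zero => exact ⟨0, fun α _ r _ S _ => Or.inl ⟨∅, by simp, by simp, by simp⟩⟩
  | succ s ihs =>
    induction t with
    | zero => exact ⟨0, fun α _ r _ S _ => Or.inr ⟨∅, by simp, by simp, by simp⟩⟩
    | succ t iht =>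
      obtain ⟨R1, h1⟩ := ihs (t + 1)
      obtain ⟨R2, h2⟩ := iht
      refine ⟨R1 + R2 + 1, fun α _ r hr S hS => ?_⟩
      obtain ⟨v, hv⟩ : S.Nonempty := by
        rw [← Finset.card_pos]; omega
      have hc := Finset.card_filter_add_card_filter_not (s := S.erase v) (fun x => r v x = true)
      rw [Finset.card_erase_of_mem hv] at hc
      by_cases hR : R1 ≤ ((S.erase v).filter (fun x => r v x = true)).card
      · rcases h1 α inferInstance r hr _ hR with ⟨A, hA, hAc, hAr⟩ | ⟨A, hA, hAc, hAr⟩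
        · left
          have hm : ∀ x ∈ A, (x ≠ v ∧ x ∈ S) ∧ r v x = true := fun x hx => by
            simpa using hA hx
          refine ⟨insert v A, ?_, ?_, ?_⟩
          · intro x hx
            rcases Finset.mem_insert.1 hx with rfl | hx
            · exact hv
            · exact (hm x hx).1.2
          · rw [Finset.card_insert_of_notMem, hAc]
            intro h
            exact (hm v h).1.1 rfl
          · intro x hx y hy hxy
            rcases Finset.mem_insert.1 hx with hx1 | hx1 <;>
              rcases Finset.mem_insert.1 hy with hy1 | hy1
            · exact absurd (hx1.trans hy1.symm) hxy
            · rw [hx1]; exact (hm y hy1).2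
            · rw [hr, hy1]; exact (hm x hx1).2
            · exact hAr x hx1 y hy1 hxy
        · right
          exact ⟨A, hA.trans ((Finset.filter_subset _ _).trans (Finset.erase_subset _ _)), hAc, hAr⟩
      · have hR' : R2 ≤ ((S.erase v).filter (fun x => ¬ r v x = true)).card := by omega
        rcases h2 α inferInstance r hr _ hR' with ⟨A, hA, hAc, hAr⟩ | ⟨A, hA, hAc, hAr⟩
        · left
          exact ⟨A, hA.trans ((Finset.filter_subset _ _).trans (Finset.erase_subset _ _)), hAc, hAr⟩
        · right
          have hm : ∀ x ∈ A, (x ≠ v ∧ x ∈ S) ∧ r v x = false := fun x hx => by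
            simpa using hA hx
          refine ⟨insert v A, ?_, ?_, ?_⟩
          · intro x hx
            rcases Finset.mem_insert.1 hx with rfl | hx
            · exact hv
            · exact (hm x hx).1.2
          · rw [Finset.card_insert_of_notMem, hAc]
            intro h
            exact (hm v h).1.1 rfl
          · intro x hx y hy hxy
            rcases Finset.mem_insert.1 hx with hx1 | hx1 <;>
              rcases Finset.mem_insert.1 hy with hy1 | hy1
            · exact absurd (hx1.trans hy1.symm) hxy
            · rw [hx1]; exact (hm y hy1).2
            · rw [hr, hy1]; exact (hm x hx1).2
            · exact hAr x hx1 y hy1 hxy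

theorem aux_row {N n : ℕ} (χ : Sym2 (Fin N × Fin N) → Bool) (y : Fin N) (A : Finset (Fin N))
    (hc : A.card = n)
    (h : ∀ x ∈ A, ∀ x' ∈ A, x ≠ x' → χ s((x, y), (x', y)) = false) :
    HasBlueGridClique N n χ := by
  refine ⟨A.image (fun x => (x, y)), ?_, ?_⟩
  · rw [Finset.card_image_of_injective _ (fun a b hab => (Prod.mk.inj hab).1), hc]
  · intro p hp q hq hpq
    obtain ⟨x, hx, rfl⟩ := Finset.mem_image.1 hp
    obtain ⟨x', hx', rfl⟩ := Finset.mem_image.1 hq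
    have hne : x ≠ x' := fun e => hpq (by rw [e])
    exact ⟨Or.inr ⟨hne, rfl⟩, h x hx x' hx' hne⟩

theorem aux_col {N n : ℕ} (χ : Sym2 (Fin N × Fin N) → Bool) (x : Fin N) (A : Finset (Fin N))
    (hc : A.card = n)
    (h : ∀ y ∈ A, ∀ y' ∈ A, y ≠ y' → χ s((x, y), (x, y')) = false) :
    HasBlueGridClique N n χ := by
  refine ⟨A.image (fun y => (x, y)), ?_, ?_⟩
  · rw [Finset.card_image_of_injective _ (fun a b hab => (Prod.mk.inj hab).2), hc]
  · intro p hp q hq hpq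
    obtain ⟨y, hy, rfl⟩ := Finset.mem_image.1 hp
    obtain ⟨y', hy', rfl⟩ := Finset.mem_image.1 hq
    have hne : y ≠ y' := fun e => hpq (by rw [e])
    exact ⟨Or.inl ⟨rfl, hne⟩, h y hy y' hy' hne⟩

theorem aux_grid_finite (n : ℕ) : ∃ N : ℕ, ∀ χ : Sym2 (Fin N × Fin N) → Bool,
    HasRedSubgrid N 3 2 χ ∨ HasBlueGridClique N n χ := by
  obtain ⟨R2, h2⟩ := aux_ramsey 3 n
  obtain ⟨R1, h1⟩ := aux_ramsey R2 n
  obtain ⟨N, hN⟩ : ∃ N, N = n * n * R1 + n + 1 := ⟨_, rfl⟩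
  refine ⟨N, fun χ => ?_⟩
  by_cases hb : HasBlueGridClique N n χ
  · exact Or.inr hb
  left
  obtain ⟨Y, -, hY⟩ := Finset.exists_subset_card_eq
    (s := (Finset.univ : Finset (Fin N))) (n := n) (by rw [Finset.card_fin, hN]; omega)
  have hp : ∀ x : Fin N, ∃ p : Fin N × Fin N, (p ∈ Y ×ˢ Y) ∧ p.1 ≠ p.2 ∧
      χ s((x, p.1), (x, p.2)) = true := by
    intro x
    by_contra hcon
    apply hb
    refine aux_col χ x Y hY ?_
    intro y hy y' hy' hne
    by_contra hch
    exact hcon ⟨(y, y'), Finset.mk_mem_product hy hy', hne, by simpa using hch⟩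
  choose f hf1 hf2 hf3 using hp
  obtain ⟨p, -, hp⟩ := Finset.exists_lt_card_fiber_of_mul_lt_card_of_maps_to
    (s := (Finset.univ : Finset (Fin N))) (t := Y ×ˢ Y) (f := f) (n := R1)
    (fun x _ => hf1 x) (by rw [Finset.card_product, hY, Finset.card_fin, hN]; omega)
  obtain ⟨A, hA, hAc, hAr⟩ | ⟨A, hA, hAc, hAr⟩ :=
    h1 (Fin N) inferInstance (fun x x' => χ s((x, p.1), (x', p.1)))
      (fun x x' => by rw [Sym2.eq_swap]) _ hp.le
  swap
  · exact absurd (aux_row χ p.1 A hAc hAr) hb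
  obtain ⟨B, hB, hBc, hBr⟩ | ⟨B, hB, hBc, hBr⟩ :=
    h2 (Fin N) inferInstance (fun x x' => χ s((x, p.2), (x', p.2)))
      (fun x x' => by rw [Sym2.eq_swap]) A hAc.ge
  swap
  · exact absurd (aux_row χ p.2 B hBc hBr) hb
  have hfib : ∀ x ∈ B, f x = p := fun x hx => by simpa using hA (hB hx)
  obtain ⟨x0, hx0⟩ : B.Nonempty := by rw [← Finset.card_pos]; omega
  have hpne : p.1 ≠ p.2 := by
    have := hf2 x0
    rwa [hfib x0 hx0] at this
  refine ⟨B, {p.1, p.2}, hBc, Finset.card_pair hpne, ?_, ?_⟩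
  · intro x hx x' hx' y hy hne
    simp only [Finset.mem_insert, Finset.mem_singleton] at hy
    rcases hy with rfl | rfl
    · exact hAr x (hB hx) x' (hB hx') hne
    · exact hBr x hx x' hx' hne
  · intro x hx y hy y' hy' hne
    have h3 := hf3 x
    rw [hfib x hx] at h3
    simp only [Finset.mem_insert, Finset.mem_singleton] at hy hy'
    rcases hy with rfl | rfl <;> rcases hy' with rfl | rfl
    · exact absurd rfl hne
    · exact h3
    · rw [Sym2.eq_swap]; exact h3
    · exact absurd rfl hne

theorem aux_line {N : ℕ} (S : Finset (Fin N × Fin N)) (hc : 2 ≤ S.card)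
    (h : ∀ p ∈ S, ∀ q ∈ S, p ≠ q → GridAdj p q) :
    (∃ x, ∀ p ∈ S, p.1 = x) ∨ (∃ y, ∀ p ∈ S, p.2 = y) := by
  obtain ⟨a, ha, b, hb, hab⟩ := Finset.one_lt_card.1 hc
  rcases h a ha b hb hab with ⟨h1, h2⟩ | ⟨h1, h2⟩
  · left
    refine ⟨a.1, fun p hp => ?_⟩
    by_contra hne
    have hpa := h p hp a ha (fun e => hne (by rw [e]))
    have hpb := h p hp b hb (fun e => hne (by rw [e, h1]))
    unfold GridAdj at hpa hpb
    grind
  · right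
    refine ⟨a.2, fun p hp => ?_⟩
    by_contra hne
    have hpa := h p hp a ha (fun e => hne (by rw [e]))
    have hpb := h p hp b hb (fun e => hne (by rw [e, h2]))
    unfold GridAdj at hpa hpb
    grind

set_option maxHeartbeats 1000000 in
theorem aux_main (N n : ℕ) (hn : 2 ≤ n) (H : ∀ χ : Sym2 (Fin N × Fin N) → Bool,
        HasRedSubgrid N 3 2 χ ∨ HasBlueGridClique N n χ)
    (χ : Finset (Fin (2 * N)) → Bool) :
    HasRedK5e (2 * N) χ ∨ HasBlueStar (2 * N) n χ := by
  obtain ⟨f, hf⟩ : ∃ f : Fin N → Fin (2 * N), ∀ x, (f x).val = x.val :=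
    ⟨fun x => ⟨x.val, by omega⟩, fun _ => rfl⟩
  obtain ⟨g, hg⟩ : ∃ g : Fin N → Fin (2 * N), ∀ x, (g x).val = N + x.val :=
    ⟨fun x => ⟨N + x.val, by omega⟩, fun _ => rfl⟩
  have hfi : Function.Injective f := fun a b h => by
    have := congrArg Fin.val h
    rw [hf, hf] at this
    exact Fin.ext this
  have hgi : Function.Injective g := fun a b h => by
    have := congrArg Fin.val h
    rw [hg, hg] at this
    exact Fin.ext (by omega)
  have hfg : ∀ x y, f x ≠ g y := fun x y h => by
    have := congrArg Fin.val h
    rw [hf, hg] at this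
    omega
  rcases H (fun e => χ (e.toFinset.image (fun p => f p.1) ∪ e.toFinset.image (fun p => g p.2)))
    with ⟨A, B, hA, hB, h1, h2⟩ | ⟨S, hS, h⟩
  · left
    have k1 : ∀ x ∈ A, ∀ x' ∈ A, ∀ y ∈ B, f x ≠ f x' → χ {f x, f x', g y} = true := by
      intro x hx x' hx' y hy hne
      rw [← h1 x hx x' hx' y hy (fun e => hne (by rw [e]))]
      congr 1
      ext z
      simp [Sym2.toFinset_mk_eq]
    have k2 : ∀ x ∈ A, ∀ y ∈ B, ∀ y' ∈ B, g y ≠ g y' → χ {f x, g y, g y'} = true := by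
      intro x hx y hy y' hy' hne
      rw [← h2 x hx y hy y' hy' (fun e => hne (by rw [e]))]
      congr 1
      ext z
      simp [Sym2.toFinset_mk_eq]
      exact or_left_comm
    have hAc : (A.image f).card = 3 := by rw [Finset.card_image_of_injective _ hfi, hA]
    have hBc : (B.image g).card = 2 := by rw [Finset.card_image_of_injective _ hgi, hB]
    have hd : Disjoint (A.image f) (B.image g) := by
      rw [Finset.disjoint_left]
      intro z hz hz'
      obtain ⟨x, -, rfl⟩ := Finset.mem_image.1 hz
      obtain ⟨y, -, hy⟩ := Finset.mem_image.1 hz'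
      exact hfg x y hy.symm
    have hc5 : (A.image f ∪ B.image g).card = 5 := by
      rw [Finset.card_union_of_disjoint hd, hAc, hBc]
    refine ⟨A.image f ∪ B.image g, hc5, ?_⟩
    have hsub : ((A.image f ∪ B.image g).powersetCard 3).erase (A.image f) ⊆
        ((A.image f ∪ B.image g).powersetCard 3).filter fun T => χ T = true := by
      intro T hT
      obtain ⟨hTA, hT⟩ := Finset.mem_erase.1 hT
      refine Finset.mem_filter.2 ⟨hT, ?_⟩
      obtain ⟨hTs, hTc⟩ := Finset.mem_powersetCard.1 hT
      obtain ⟨a, b, c, hab, hac, hbc, rfl⟩ := Finset.card_eq_three.1 hTc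
      have ma := Finset.mem_union.1 (hTs (show a ∈ _ by simp))
      have mb := Finset.mem_union.1 (hTs (show b ∈ _ by simp))
      have mc := Finset.mem_union.1 (hTs (show c ∈ _ by simp))
      have e1 : ({a, b, c} : Finset (Fin (2 * N))) = {a, c, b} := by clear * -; grind
      have e2 : ({a, b, c} : Finset (Fin (2 * N))) = {b, c, a} := by clear * -; grind
      have e3 : ({a, b, c} : Finset (Fin (2 * N))) = {b, a, c} := by clear * -; grind
      have e4 : ({a, b, c} : Finset (Fin (2 * N))) = {c, a, b} := by clear * -; grind
      rcases ma with ma | ma <;> rcases mb with mb | mb <;> rcases mc with mc | mc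
      · exfalso
        apply hTA
        apply Finset.eq_of_subset_of_card_le
        · intro z hz
          simp only [Finset.mem_insert, Finset.mem_singleton] at hz
          rcases hz with rfl | rfl | rfl <;> assumption
        · rw [hAc, hTc]
      all_goals try
        (obtain ⟨a, ha, rfl⟩ := Finset.mem_image.1 ma
         obtain ⟨b, hb, rfl⟩ := Finset.mem_image.1 mb
         obtain ⟨c, hc, rfl⟩ := Finset.mem_image.1 mc)
      · exact k1 a ha b hb c hc hab
      · rw [e1]; exact k1 a ha c hc b hb hac
      · exact k2 a ha b hb c hc hbc
      · rw [e2]; exact k1 b hb c hc a ha hbc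
      · rw [e3]; exact k2 b hb a ha c hc hac
      · rw [e4]; exact k2 c hc a ha b hb hab
      · exfalso
        have hle : ({g a, g b, g c} : Finset (Fin (2 * N))).card ≤ (B.image g).card := by
          apply Finset.card_le_card
          intro z hz
          simp only [Finset.mem_insert, Finset.mem_singleton] at hz
          rcases hz with rfl | rfl | rfl <;> assumption
        omega
    have := Finset.card_le_card hsub
    rw [Finset.card_erase_of_mem, Finset.card_powersetCard, hc5] at this
    · exact this
    · exact Finset.mem_powersetCard.2 ⟨Finset.subset_union_left, hAc⟩
  · right
    rcases aux_line S (by omega) (fun p hp q hq hpq => (h p hp q hq hpq).1) with ⟨x, hx⟩ | ⟨y, hy⟩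
    · refine ⟨f x, S.image (fun p => g p.2), ?_, ?_, ?_⟩
      · intro hm
        obtain ⟨p, -, hp⟩ := Finset.mem_image.1 hm
        exact hfg _ _ hp.symm
      · rw [Finset.card_image_of_injOn, hS]
        intro p hp q hq hpq
        exact Prod.ext ((hx p hp).trans (hx q hq).symm) (hgi hpq)
      · intro a ha b hb hab
        obtain ⟨p, hp, rfl⟩ := Finset.mem_image.1 ha
        obtain ⟨q, hq, rfl⟩ := Finset.mem_image.1 hb
        rw [← (h p hp q hq (fun e => hab (by rw [e]))).2]
        congr 1
        ext z
        simp [Sym2.toFinset_mk_eq, hx p hp, hx q hq]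
        exact or_left_comm
    · refine ⟨g y, S.image (fun p => f p.1), ?_, ?_, ?_⟩
      · intro hm
        obtain ⟨p, -, hp⟩ := Finset.mem_image.1 hm
        exact hfg _ _ hp
      · rw [Finset.card_image_of_injOn, hS]
        intro p hp q hq hpq
        exact Prod.ext (hfi hpq) ((hy p hp).trans (hy q hq).symm)
      · intro a ha b hb hab
        obtain ⟨p, hp, rfl⟩ := Finset.mem_image.1 ha
        obtain ⟨q, hq, rfl⟩ := Finset.mem_image.1 hb
        rw [← (h p hp q hq (fun e => hab (by rw [e]))).2]
        congr 1
        ext z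
        simp [Sym2.toFinset_mk_eq, hy p hp, hy q hq]
        tauto

/-- For all positive `N` and `n ≥ 2`: if every red/blue edge-coloring of `Γ_{N,N}`
contains a red `Γ₃,₂` or a blue `K_n`, then every 2-coloring of `K_{2N}^(3)` contains a
red `K₅⁽³⁾ − e` or a blue `Sₙ`. Consequently, `r(K₅⁽³⁾ − e, Sₙ) ≤ 2 · gr(Γ₃,₂, K_n)`. -/
theorem ramseyK5e_le_two_gridRamsey32 (N n : ℕ) (hN : 0 < N) (hn : 2 ≤ n) :
    ((∀ χ : Sym2 (Fin N × Fin N) → Bool,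
        HasRedSubgrid N 3 2 χ ∨ HasBlueGridClique N n χ) →
      ∀ χ : Finset (Fin (2 * N)) → Bool,
        HasRedK5e (2 * N) χ ∨ HasBlueStar (2 * N) n χ) ∧
    ramseyK5eStar n ≤ 2 * gridRamsey32 n := by
  refine ⟨fun H χ => aux_main N n hn H χ, ?_⟩
  have hmem := Nat.sInf_mem (s := {N : ℕ | ∀ χ : Sym2 (Fin N × Fin N) → Bool,
    HasRedSubgrid N 3 2 χ ∨ HasBlueGridClique N n χ}) (aux_grid_finite n)
  exact Nat.sInf_le (fun χ => aux_main _ n hn hmem χ)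
end
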